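/- Let n ∈ ℕ, p⃗ = (p_1,…,p_n), q⃗ = (q_1,…,q_n) ∈ (1,∞)^n, and α⃗ = (α_1,…,α_n) ∈ ℝⁿ with α_i ∈ (-1/q_i, 1 - 1/q_i) for every i ∈ {1,…,n}. Then there exists a positive constant C such that for every measurable f : ℝⁿ → ℂ, ‖M_n(f)‖_{Ė^{α⃗,p⃗}_{q⃗}(ℝⁿ)} ≤ C ‖f‖_{Ė^{α⃗,p⃗}_{q⃗}(ℝⁿ)}, where M_n is the maximal operator acting in the n-th variable. -/

import Mathlib

open MeasureTheory ENNReal Filter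

noncomputable section

/-- The dyadic annulus `R_k = (-2^k, 2^k) \ (-2^(k-1), 2^(k-1))` in `ℝ`. -/
def herzRing (k : ℤ) : Set ℝ :=
  Set.Ioo (-(2 : ℝ) ^ k) ((2 : ℝ) ^ k) \ Set.Ioo (-(2 : ℝ) ^ (k - 1)) ((2 : ℝ) ^ (k - 1))

/-- The `L^q` "norm" (valued in `ℝ≥0∞`) of an `ℝ≥0∞`-valued function on a set `s ⊆ ℝ`,
with the usual modification when `q = ∞`. -/
def lqNormOn (q : ℝ≥0∞) (s : Set ℝ) (g : ℝ → ℝ≥0∞) : ℝ≥0∞ :=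
  if q = ∞ then essSup (s.indicator g) volume
  else (∫⁻ x in s, g x ^ q.toReal) ^ (1 / q.toReal)

/-- The `l^p` norm over `ℤ` of an `ℝ≥0∞`-valued sequence, with the usual modification
when `p = ∞`. -/
def lpZNorm (p : ℝ≥0∞) (a : ℤ → ℝ≥0∞) : ℝ≥0∞ :=
  if p = ∞ then ⨆ k, a k
  else (∑' k : ℤ, a k ^ p.toReal) ^ (1 / p.toReal)

/-- The one-dimensional Herz norm `K^{α,p}_q` of an `ℝ≥0∞`-valued function on `ℝ`. -/
def herzNorm1 (α : ℝ) (p q : ℝ≥0∞) (g : ℝ → ℝ≥0∞) : ℝ≥0∞ :=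
  lpZNorm p fun k => ENNReal.ofReal ((2 : ℝ) ^ ((k : ℝ) * α)) * lqNormOn q (herzRing k) g

/-- The mixed-norm Herz norm on `ℝⁿ` of an `ℝ≥0∞`-valued function: the Herz norm
`K^{α_1,p_1}_{q_1}` is applied in the first variable, then `K^{α_2,p_2}_{q_2}` in the
second variable, …, and finally `K^{α_n,p_n}_{q_n}` in the last variable. -/
def mixedHerzNormE : (n : ℕ) → (Fin n → ℝ) → (Fin n → ℝ≥0∞) → (Fin n → ℝ≥0∞) →
    ((Fin n → ℝ) → ℝ≥0∞) → ℝ≥0∞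
  | 0, _, _, _, f => f fun i => i.elim0
  | n + 1, α, p, q, f =>
    herzNorm1 (α (Fin.last n)) (p (Fin.last n)) (q (Fin.last n)) fun xlast =>
      mixedHerzNormE n (Fin.init α) (Fin.init p) (Fin.init q) fun y => f (Fin.snoc y xlast)

/-- The mixed-norm Herz norm `‖f‖_{Ė^{α,p}_q(ℝⁿ)}` of a complex-valued function on `ℝⁿ`. -/
def herzNormC (n : ℕ) (α : Fin n → ℝ) (p q : Fin n → ℝ≥0∞) (f : (Fin n → ℝ) → ℂ) : ℝ≥0∞ :=
  mixedHerzNormE n α p q fun x => (‖f x‖₊ : ℝ≥0∞)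

/-- `I_m = (-2^m, -2^{-m}] ∪ [2^{-m}, 2^m)`. -/
def herzI (m : ℕ) : Set ℝ :=
  Set.Ioc (-(2 : ℝ) ^ (m : ℤ)) (-(2 : ℝ) ^ (-(m : ℤ))) ∪
    Set.Ico ((2 : ℝ) ^ (-(m : ℤ))) ((2 : ℝ) ^ (m : ℤ))

/-- `A_m = I_m^n ⊆ ℝⁿ`. -/
def herzA (n m : ℕ) : Set (Fin n → ℝ) := Set.univ.pi fun _ => herzI m

/-- The class `H(ℝⁿ)` of simple functions built from finitely many pairwise disjoint
parallelepipeds contained in some `A_m`. -/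
def IsHSimple (n : ℕ) (f : (Fin n → ℝ) → ℂ) : Prop :=
  ∃ (m N : ℕ) (a : Fin N → ℂ) (E : Fin N → Fin n → Set ℝ),
    (∀ k i, MeasurableSet (E k i)) ∧
    (∀ k, Set.univ.pi (E k) ⊆ herzA n m) ∧
    (Pairwise fun k l => Disjoint (Set.univ.pi (E k)) (Set.univ.pi (E l))) ∧
    f = fun x => ∑ k, (Set.univ.pi (E k)).indicator (fun _ => a k) x

/-- The Euclidean ball `B(x,r)` in `ℝⁿ`. -/
def eucBall (n : ℕ) (x : Fin n → ℝ) (r : ℝ) : Set (Fin n → ℝ) :=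
  {y | ∑ i, (y i - x i) ^ 2 < r ^ 2}

/-- The (uncentered) maximal operator in the `k`-th variable. -/
def maxVar (n : ℕ) (k : Fin n) (g : (Fin n → ℝ) → ℝ≥0∞) : (Fin n → ℝ) → ℝ≥0∞ :=
  fun x => ⨆ (a : ℝ) (b : ℝ) (_ : x k ∈ Set.Ioo a b),
    (volume (Set.Ioo a b))⁻¹ * ∫⁻ y in Set.Ioo a b, g (Function.update x k y)

/-- The centered Hardy–Littlewood maximal operator on `ℝⁿ`. -/
def centeredMax (n : ℕ) (g : (Fin n → ℝ) → ℝ≥0∞) : (Fin n → ℝ) → ℝ≥0∞ :=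
  fun x => ⨆ (r : ℝ) (_ : 0 < r),
    (volume (eucBall n x r))⁻¹ * ∫⁻ y in eucBall n x r, g y

/-- The composition `M_n ∘ ⋯ ∘ M_1` of the maximal operators in each variable. -/
def iteratedMax (n : ℕ) (g : (Fin n → ℝ) → ℝ≥0∞) : (Fin n → ℝ) → ℝ≥0∞ :=
  (List.ofFn fun k : Fin n => maxVar n k).foldl (fun h F => F h) g

/-- The iterated maximal operator `ℳ_t(f) = [M_n ⋯ M_1(|f|^t)]^{1/t}`. -/
def iterMaxPow (n : ℕ) (t : ℝ) (f : (Fin n → ℝ) → ℂ) : (Fin n → ℝ) → ℝ≥0∞ :=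
  fun x => iteratedMax n (fun y => (‖f y‖₊ : ℝ≥0∞) ^ t) x ^ (1 / t)

/-- The `l^r`-Herz type mixed norm of a sequence of functions on `ℝⁿ`. -/
def herzSeqNorm (n : ℕ) (r : ℝ≥0∞) (α : Fin n → ℝ) (p q : Fin n → ℝ≥0∞)
    (F : ℤ → (Fin n → ℝ) → ℂ) : ℝ≥0∞ :=
  mixedHerzNormE n α p q fun x => lpZNorm r fun j => (‖F j x‖₊ : ℝ≥0∞)

/-- `N` is a ball quasi-Banach function norm on (nonnegative extended-real-valued)
measurable functions on `ℝⁿ`. -/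
def IsBQBFNorm (n : ℕ) (N : ((Fin n → ℝ) → ℝ≥0∞) → ℝ≥0∞) : Prop :=
  (∀ f : (Fin n → ℝ) → ℝ≥0∞, Measurable f → N f = 0 → f =ᵐ[volume] 0) ∧
  (∀ f g : (Fin n → ℝ) → ℝ≥0∞, Measurable f → Measurable g →
    (∀ᵐ x ∂volume, g x ≤ f x) → N g ≤ N f) ∧
  (∀ (fm : ℕ → (Fin n → ℝ) → ℝ≥0∞) (f : (Fin n → ℝ) → ℝ≥0∞),
    (∀ m, Measurable (fm m)) → Measurable f →
    (∀ᵐ x ∂volume, Monotone (fun m => fm m x) ∧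
      Tendsto (fun m => fm m x) atTop (nhds (f x))) →
    Monotone (fun m => N (fm m)) ∧ Tendsto (fun m => N (fm m)) atTop (nhds (N f))) ∧
  (∀ (x : Fin n → ℝ) (r : ℝ), 0 < r →
    N ((eucBall n x r).indicator fun _ => (1 : ℝ≥0∞)) ≠ ∞)

/-- `N` is a ball Banach function norm: a ball quasi-Banach function norm that moreover
satisfies the triangle inequality and locally dominates the `L¹` norm. -/
def IsBallBanachNorm (n : ℕ) (N : ((Fin n → ℝ) → ℝ≥0∞) → ℝ≥0∞) : Prop :=
  IsBQBFNorm n N ∧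
  (∀ f g : (Fin n → ℝ) → ℝ≥0∞, Measurable f → Measurable g → N (f + g) ≤ N f + N g) ∧
  (∀ (x : Fin n → ℝ) (r : ℝ), 0 < r → ∃ C : ℝ≥0∞, 0 < C ∧ C ≠ ∞ ∧
    ∀ f : (Fin n → ℝ) → ℝ≥0∞, Measurable f → (∫⁻ y in eucBall n x r, f y) ≤ C * N f)

/-- The associate (Köthe dual) norm of a function norm `N`. -/
def assocNormOf (n : ℕ) (N : ((Fin n → ℝ) → ℝ≥0∞) → ℝ≥0∞)
    (f : (Fin n → ℝ) → ℝ≥0∞) : ℝ≥0∞ :=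
  ⨆ (g : (Fin n → ℝ) → ℝ≥0∞) (_ : Measurable g) (_ : N g = 1), ∫⁻ x, f x * g x

/-- The `θ`-convexification of a function norm: `‖f‖_{X^θ} = ‖|f|^θ‖_X^{1/θ}`
(here stated with `θ` in place of `1/p`, so `X^{1/p}` is `convexPow n (1/p) N`). -/
def convexPow (n : ℕ) (θ : ℝ) (N : ((Fin n → ℝ) → ℝ≥0∞) → ℝ≥0∞)
    (f : (Fin n → ℝ) → ℝ≥0∞) : ℝ≥0∞ :=
  N (fun x => f x ^ θ) ^ (1 / θ)

/-- The associate space norm of the mixed-norm Herz space, for complex-valued functions. -/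
def herzAssocNormC (n : ℕ) (α : Fin n → ℝ) (p q : Fin n → ℝ≥0∞)
    (f : (Fin n → ℝ) → ℂ) : ℝ≥0∞ :=
  ⨆ (g : (Fin n → ℝ) → ℂ) (_ : Measurable g) (_ : herzNormC n α p q g = 1),
    ∫⁻ x, (‖f x * g x‖₊ : ℝ≥0∞)

/-!
Lerner's argument bounds the maximal operator on `L^r(w)` for every `A_r` weight `w`, with a constant
depending only on that of `w`. Weighted bounds of this kind survive taking an `L^q` norm in a further
variable: for `r = q` this is Tonelli's theorem, and Rubio de Francia extrapolation moves `r` to any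
other exponent. A Herz norm is an `ℓ^p` norm of `L^q` norms, so induction on the variables gives a
weighted inequality, in the last variable, between the functions obtained by taking the inner mixed
Herz norm of `M_n f` and of `f`.

For the Herz norm in the last variable, put `a = α_n q_n ∈ (-1, q_n - 1)` and take `δ > 0` small. The
minimum of `2^(kδ) |x|^(a-δ)` and `2^(-kδ) |x|^(a+δ)` is an `A_{q_n}` weight with constant independent
of `k`, comparable to `2^(ka)` on `R_k` and to `2^(-δ|j-k|) 2^(ja)` on `R_j`. The weighted
inequality for it compares the `k`-th term of the Herz norm of `M_n f` with a geometrically decaying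
sum of the terms of the Herz norm of `f`, whatever the outer exponent.
-/

/-! ### The uncentred maximal function -/

/-- The uncentred maximal function of `f` with respect to a measure `μ` on `ℝ`, the supremum being
taken over bounded open intervals. An interval of infinite measure contributes `0`. -/
def intervalMax (μ : Measure ℝ) (f : ℝ → ℝ≥0∞) (x : ℝ) : ℝ≥0∞ :=
  ⨆ (a : ℝ) (b : ℝ) (_ : x ∈ Set.Ioo a b), (μ (Set.Ioo a b))⁻¹ * ∫⁻ y in Set.Ioo a b, f y ∂μ

section IntervalMax

variable {μ : Measure ℝ} {f : ℝ → ℝ≥0∞}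

theorem average_le_intervalMax {a b x : ℝ} (hx : x ∈ Set.Ioo a b) :
    (μ (Set.Ioo a b))⁻¹ * ∫⁻ y in Set.Ioo a b, f y ∂μ ≤ intervalMax μ f x :=
  le_iSup_of_le a (le_iSup_of_le b (le_iSup_of_le hx le_rfl))

theorem intervalMax_le_iff {x : ℝ} {l : ℝ≥0∞} :
    intervalMax μ f x ≤ l ↔ ∀ a b, x ∈ Set.Ioo a b →
      (μ (Set.Ioo a b))⁻¹ * ∫⁻ y in Set.Ioo a b, f y ∂μ ≤ l := by
  simp only [intervalMax, iSup_le_iff]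

theorem setOf_lt_intervalMax (l : ℝ≥0∞) :
    {x | l < intervalMax μ f x} = ⋃ i : {i : ℝ × ℝ //
      l < (μ (Set.Ioo i.1 i.2))⁻¹ * ∫⁻ y in Set.Ioo i.1 i.2, f y ∂μ},
      Set.Ioo i.1.1 i.1.2 := by
  ext x
  simp only [intervalMax, lt_iSup_iff, Set.mem_ofPred_eq, Set.mem_iUnion, Subtype.exists,
    Prod.exists, exists_prop, and_comm]

theorem measurable_intervalMax (μ : Measure ℝ) (f : ℝ → ℝ≥0∞) : Measurable (intervalMax μ f) := by
  refine measurable_of_Ioi fun l => ?_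
  have h : intervalMax μ f ⁻¹' Set.Ioi l = _ := setOf_lt_intervalMax l
  exact h ▸ (isOpen_iUnion fun _ => isOpen_Ioo).measurableSet

theorem intervalMax_mono {g : ℝ → ℝ≥0∞} (h : f ≤ᵐ[μ] g) (x : ℝ) :
    intervalMax μ f x ≤ intervalMax μ g x :=
  iSup_mono fun _ => iSup_mono fun _ => iSup_mono fun _ =>
    mul_le_mul_right (lintegral_mono_ae (ae_restrict_of_ae h)) _

theorem intervalMax_tsum_le {ι : Type*} [Countable ι] {g : ι → ℝ → ℝ≥0∞}
    (hg : ∀ i, AEMeasurable (g i) μ) (x : ℝ) :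
    intervalMax μ (fun y => ∑' i, g i y) x ≤ ∑' i, intervalMax μ (g i) x := by
  refine intervalMax_le_iff.2 fun a b hx => ?_
  rw [lintegral_tsum fun i => (hg i).restrict, ← ENNReal.tsum_mul_left]
  exact ENNReal.tsum_le_tsum fun i => average_le_intervalMax hx

theorem intervalMax_const_mul_le (c : ℝ≥0∞) (hf : AEMeasurable f μ) (x : ℝ) :
    intervalMax μ (fun y => c * f y) x ≤ c * intervalMax μ f x := by
  refine intervalMax_le_iff.2 fun a b hx => ?_
  rw [lintegral_const_mul'' c hf.restrict, mul_left_comm]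
  gcongr
  exact average_le_intervalMax hx

theorem intervalMax_add_le {g : ℝ → ℝ≥0∞} (hf : AEMeasurable f μ) (x : ℝ) :
    intervalMax μ (fun y => f y + g y) x ≤ intervalMax μ f x + intervalMax μ g x := by
  refine intervalMax_le_iff.2 fun a b hx => ?_
  rw [lintegral_add_left' hf.restrict, mul_add]
  exact add_le_add (average_le_intervalMax hx) (average_le_intervalMax hx)

end IntervalMax

theorem exists_Ioo_subset_union {α : Type*} [LinearOrder α] {s : Finset (α × α)} {x : α}
    (hx : ∀ i ∈ s, x ∈ Set.Ioo i.1 i.2) (hs : 2 < s.card) :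
    ∃ i ∈ s, ∃ j ∈ s, ∃ k ∈ s, j ≠ i ∧ k ≠ i ∧
      Set.Ioo i.1 i.2 ⊆ Set.Ioo j.1 j.2 ∪ Set.Ioo k.1 k.2 := by
  classical
  have hne : s.Nonempty := Finset.card_pos.1 (by lia)
  obtain ⟨j, hj, hjmin⟩ := s.exists_min_image Prod.fst hne
  obtain ⟨k, hk, hkmax⟩ := s.exists_max_image Prod.snd hne
  obtain ⟨i, hi, hijk⟩ := Finset.exists_mem_notMem_of_card_lt_card
    ((Finset.card_le_two (a := j) (b := k)).trans_lt hs)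
  simp only [Finset.mem_insert, Finset.mem_singleton, not_or] at hijk
  refine ⟨i, hi, j, hj, k, hk, Ne.symm hijk.1, Ne.symm hijk.2, fun y hy => ?_⟩
  rcases le_or_gt y x with hyx | hxy
  · exact Or.inl ⟨(hjmin i hi).trans_lt hy.1, hyx.trans_lt (hx j hj).2⟩
  · exact Or.inr ⟨(hx k hk).1.trans hxy, hy.2.trans_le (hkmax i hi)⟩

theorem exists_subfamily_Ioo_overlap_le_two {α : Type*} [LinearOrder α] (s : Finset (α × α)) :
    ∃ t ⊆ s, (⋃ i ∈ s, Set.Ioo i.1 i.2) ⊆ (⋃ i ∈ t, Set.Ioo i.1 i.2) ∧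
      ∀ x, (t.filter fun i => x ∈ Set.Ioo i.1 i.2).card ≤ 2 := by
  classical
  induction s using Finset.strongInduction with
  | H s ih =>
    by_cases h : ∀ x, (s.filter fun i => x ∈ Set.Ioo i.1 i.2).card ≤ 2
    · exact ⟨s, subset_rfl, subset_rfl, h⟩
    push Not at h
    obtain ⟨x, hx⟩ := h
    obtain ⟨i, hi, j, hj, k, hk, hji, hki, hsub⟩ :=
      exists_Ioo_subset_union (fun i hi => (Finset.mem_filter.1 hi).2) hx
    have mem_erase {l} (hl : l ∈ s.filter fun i => x ∈ Set.Ioo i.1 i.2) (hli : l ≠ i) :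
        l ∈ s.erase i := Finset.mem_erase.2 ⟨hli, (Finset.mem_filter.1 hl).1⟩
    obtain ⟨t, hts, hcover, hoverlap⟩ :=
      ih (s.erase i) (Finset.erase_ssubset (Finset.mem_filter.1 hi).1)
    refine ⟨t, hts.trans (Finset.erase_subset _ _), fun y hy => hcover ?_, hoverlap⟩
    obtain ⟨l, hl, hyl⟩ := Set.mem_iUnion₂.1 hy
    rcases eq_or_ne l i with rfl | hli
    · rcases hsub hyl with hyj | hyk
      · exact Set.mem_biUnion (mem_erase hj hji) hyj
      · exact Set.mem_biUnion (mem_erase hk hki) hyk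
    · exact Set.mem_biUnion (Finset.mem_erase.2 ⟨hli, hl⟩) hyl

section WeakType

variable {μ : Measure ℝ} {f : ℝ → ℝ≥0∞}

theorem sum_setLIntegral_le_of_overlap_le_two {X ι : Type*} [MeasurableSpace X] {ν : Measure X}
    {g : X → ℝ≥0∞} {t : Finset ι} {U : ι → Set X} [∀ x, DecidablePred fun i => x ∈ U i]
    (hg : Measurable g) (hU : ∀ i ∈ t, MeasurableSet (U i))
    (ht : ∀ x, (t.filter fun i => x ∈ U i).card ≤ 2) :
    ∑ i ∈ t, ∫⁻ x in U i, g x ∂ν ≤ 2 * ∫⁻ x, g x ∂ν := by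
  calc ∑ i ∈ t, ∫⁻ x in U i, g x ∂ν
      = ∫⁻ x, ∑ i ∈ t, (U i).indicator g x ∂ν := by
        rw [lintegral_finsetSum' _ fun i hi => (hg.indicator (hU i hi)).aemeasurable]
        exact Finset.sum_congr rfl fun i hi => (lintegral_indicator (hU i hi) _).symm
    _ ≤ ∫⁻ x, 2 * g x ∂ν := lintegral_mono fun x => by
        simp only [Set.indicator_apply, ← Finset.sum_filter, Finset.sum_const, nsmul_eq_mul]
        gcongr
        exact_mod_cast ht x
    _ = 2 * ∫⁻ x, g x ∂ν := lintegral_const_mul _ hg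

theorem mul_measure_le_of_le_inv_mul {c m I : ℝ≥0∞} (h : c < m⁻¹ * I) : c * m ≤ I := by
  rcases eq_or_ne m 0 with rfl | hm0
  · simp
  rcases eq_or_ne m ∞ with rfl | hm
  · simp at h
  rw [← ENNReal.div_eq_inv_mul] at h
  exact (ENNReal.le_div_iff_mul_le (Or.inl hm0) (Or.inl hm)).1 h.le

theorem mul_measure_biUnion_Ioo_le (hf : Measurable f) {l : ℝ≥0∞} {s : Finset (ℝ × ℝ)}
    (hs : ∀ i ∈ s, l < (μ (Set.Ioo i.1 i.2))⁻¹ * ∫⁻ y in Set.Ioo i.1 i.2, f y ∂μ) :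
    l * μ (⋃ i ∈ s, Set.Ioo i.1 i.2) ≤ 2 * ∫⁻ y, f y ∂μ := by
  classical
  obtain ⟨t, hts, hcover, hoverlap⟩ := exists_subfamily_Ioo_overlap_le_two s
  calc l * μ (⋃ i ∈ s, Set.Ioo i.1 i.2)
      ≤ l * ∑ i ∈ t, μ (Set.Ioo i.1 i.2) := by
        gcongr
        exact (measure_mono hcover).trans (measure_biUnion_finset_le _ _)
    _ = ∑ i ∈ t, l * μ (Set.Ioo i.1 i.2) := Finset.mul_sum ..
    _ ≤ ∑ i ∈ t, ∫⁻ y in Set.Ioo i.1 i.2, f y ∂μ :=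
        Finset.sum_le_sum fun i hi => mul_measure_le_of_le_inv_mul (hs i (hts hi))
    _ ≤ 2 * ∫⁻ y, f y ∂μ :=
        sum_setLIntegral_le_of_overlap_le_two hf (fun _ _ => measurableSet_Ioo) hoverlap

theorem mul_measure_lt_intervalMax_le (hf : Measurable f) (l : ℝ≥0∞) :
    l * μ {x | l < intervalMax μ f x} ≤ 2 * ∫⁻ y, f y ∂μ := by
  classical
  rw [setOf_lt_intervalMax]
  obtain ⟨T, hT, hTU⟩ := TopologicalSpace.isOpen_iUnion_countable
    (fun i : {i : ℝ × ℝ // l < (μ (Set.Ioo i.1 i.2))⁻¹ * ∫⁻ y in Set.Ioo i.1 i.2, f y ∂μ} =>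
      Set.Ioo i.1.1 i.1.2) fun _ => isOpen_Ioo
  have := hT.to_subtype
  have h_finite : μ (⋃ i : T, Set.Ioo i.1.1.1 i.1.1.2)
      = ⨆ s : Finset T, μ (⋃ i ∈ s, Set.Ioo i.1.1.1 i.1.1.2) := by
    rw [Set.iUnion_eq_iUnion_finset]
    exact Directed.measure_iUnion (Monotone.directed_le fun s t hst =>
      Set.biUnion_mono (fun _ hi => Finset.mem_of_subset hst hi) fun _ _ => subset_rfl)
  rw [← hTU, Set.biUnion_eq_iUnion, h_finite, ENNReal.mul_iSup]
  refine iSup_le fun s => ?_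
  have hs := mul_measure_biUnion_Ioo_le (μ := μ) hf (l := l) (s := s.image fun i => i.1.1)
    fun i hi => by
      obtain ⟨j, -, rfl⟩ := Finset.mem_image.1 hi
      exact j.1.2
  rwa [Finset.set_biUnion_finset_image] at hs

theorem intervalMax_const_le (c : ℝ≥0∞) (x : ℝ) : intervalMax μ (fun _ => c) x ≤ c := by
  refine intervalMax_le_iff.2 fun a b _ => ?_
  rw [setLIntegral_const, mul_left_comm]
  exact mul_le_of_le_one_right' (ENNReal.inv_mul_le_one _)

-- The part of `f` below level `l` contributes at most `l` to the maximal function.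
theorem mul_measure_two_mul_lt_intervalMax_le (hf : Measurable f) (l : ℝ≥0∞) :
    l * μ {x | 2 * l < intervalMax μ f x} ≤ 2 * ∫⁻ y, {y | l < f y}.indicator f y ∂μ := by
  have hg : Measurable ({y | l < f y}.indicator f) :=
    hf.indicator (measurableSet_lt measurable_const hf)
  refine le_trans ?_ (mul_measure_lt_intervalMax_le hg l)
  refine mul_le_mul_right (measure_mono fun x (hx : 2 * l < _) => ?_) _
  have hsplit : intervalMax μ f x ≤ intervalMax μ ({y | l < f y}.indicator f) x + l := by
    refine (intervalMax_mono (.of_forall fun y => ?_) x).trans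
      ((intervalMax_add_le (g := fun _ => l) hg.aemeasurable x).trans
        (add_le_add_right (intervalMax_const_le l x) _))
    by_cases hy : l < f y
    · simp [hy]
    · simp [hy, not_lt.1 hy]
  rw [two_mul] at hx
  exact lt_of_add_lt_add_right (hx.trans_le hsplit)

end WeakType

/-! ### The strong-type inequality -/

/-- The two-sided geometric series `∑_{m ∈ ℤ} 2^(-d|m|)`, the constant in dyadic summation
arguments with decay rate `d`. -/
def geomSum (d : ℝ) : ℝ≥0∞ := ∑' m : ℤ, (2 : ℝ≥0∞) ^ (-d * |(m : ℝ)|)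

theorem two_rpow_add (x y : ℝ) : (2 : ℝ≥0∞) ^ (x + y) = 2 ^ x * 2 ^ y :=
  ENNReal.rpow_add _ _ two_ne_zero ofNat_ne_top

theorem two_rpow_ne_zero (x : ℝ) : (2 : ℝ≥0∞) ^ x ≠ 0 := by
  simp [ENNReal.rpow_eq_zero_iff]

theorem two_rpow_ne_top (x : ℝ) : (2 : ℝ≥0∞) ^ x ≠ ∞ := by
  simp [ENNReal.rpow_eq_top_iff]

theorem tsum_two_rpow_neg_mul_natCast_ne_top {d : ℝ} (hd : 0 < d) :
    ∑' m : ℕ, (2 : ℝ≥0∞) ^ (-d * (m : ℝ)) ≠ ∞ := by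
  simp_rw [ENNReal.rpow_mul, ENNReal.rpow_natCast]
  rw [ENNReal.tsum_geometric, ENNReal.inv_ne_top]
  exact (tsub_pos_of_lt
    (ENNReal.rpow_lt_one_of_one_lt_of_neg ENNReal.one_lt_two (neg_lt_zero.2 hd))).ne'

theorem geomSum_ne_top {d : ℝ} (hd : 0 < d) : geomSum d ≠ ∞ := by
  have hle : geomSum d ≤ ∑' m : ℕ, (2 : ℝ≥0∞) ^ (-d * (m : ℝ))
      + ∑' m : ℕ, (2 : ℝ≥0∞) ^ (-d * (m : ℝ)) := by
    rw [geomSum, tsum_of_nat_of_neg_add_one ENNReal.summable ENNReal.summable]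
    refine add_le_add (ENNReal.tsum_le_tsum fun m => by simp) (ENNReal.tsum_le_tsum fun m => ?_)
    refine ENNReal.rpow_le_rpow_of_exponent_le one_le_two ?_
    push_cast
    rw [abs_neg, abs_of_nonneg (by positivity)]
    nlinarith
  have hfin := tsum_two_rpow_neg_mul_natCast_ne_top hd
  exact ne_top_of_le_ne_top (ENNReal.add_ne_top.2 ⟨hfin, hfin⟩) hle

theorem geomSum_ne_zero (d : ℝ) : geomSum d ≠ 0 := fun h => by
  simpa using ENNReal.tsum_eq_zero.1 h 0

theorem tsum_two_rpow_neg_mul_abs_sub (d : ℝ) (n : ℤ) :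
    ∑' m : ℤ, (2 : ℝ≥0∞) ^ (-d * |(n : ℝ) - (m : ℝ)|) = geomSum d := by
  rw [geomSum, ← (Equiv.subLeft n).tsum_eq]
  simp [Equiv.subLeft]

theorem exists_two_rpow_lt_le {a : ℝ≥0∞} (h0 : a ≠ 0) (htop : a ≠ ∞) :
    ∃ n : ℤ, (2 : ℝ≥0∞) ^ (n : ℝ) < a ∧ a ≤ 2 ^ ((n : ℝ) + 1) := by
  obtain ⟨n, hn⟩ := ENNReal.exists_mem_Ioc_zpow h0 htop (y := 2) one_lt_two ofNat_ne_top
  refine ⟨n, ?_, ?_⟩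
  · rw [ENNReal.rpow_intCast]
    exact hn.1
  · have h := hn.2
    rw [← ENNReal.rpow_intCast] at h
    exact_mod_cast h

theorem rpow_le_tsum_indicator_Ioi {p : ℝ} (hp : 0 < p) (a : ℝ≥0∞) :
    a ^ p ≤ ∑' k : ℤ, (Set.Ioi (2 * (2 : ℝ≥0∞) ^ (k : ℝ))).indicator
      (fun _ => (2 : ℝ≥0∞) ^ (((k : ℝ) + 2) * p)) a := by
  have term_le {n : ℤ} (hn : (2 : ℝ≥0∞) ^ (n : ℝ) < a) : (2 : ℝ≥0∞) ^ (((n : ℝ) + 1) * p) ≤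
      ∑' k : ℤ, (Set.Ioi (2 * (2 : ℝ≥0∞) ^ (k : ℝ))).indicator
        (fun _ => (2 : ℝ≥0∞) ^ (((k : ℝ) + 2) * p)) a := by
    have hn' : (2 : ℝ≥0∞) * 2 ^ ((n - 1 : ℤ) : ℝ) = 2 ^ (n : ℝ) := by
      nth_rw 1 [← ENNReal.rpow_one 2]
      rw [← two_rpow_add]
      push_cast
      ring_nf
    refine le_trans (le_of_eq ?_) (ENNReal.le_tsum (n - 1))
    rw [Set.indicator_of_mem (by rwa [Set.mem_Ioi, hn'])]
    push_cast
    ring_nf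
  rcases eq_or_ne a 0 with rfl | h0
  · simp [hp]
  rcases eq_or_ne a ∞ with rfl | htop
  · calc (∞ : ℝ≥0∞) ^ p ≤ ∑' _ : ℕ, 1 := by simp
      _ ≤ _ := ENNReal.tsum_le_tsum fun k => by
          rw [Set.indicator_of_mem (Set.mem_Ioi.2
            (ENNReal.mul_lt_top ofNat_lt_top (two_rpow_ne_top _).lt_top))]
          exact ENNReal.one_le_rpow one_le_two (by positivity : 0 < (((k : ℤ) : ℝ) + 2) * p)
      _ ≤ _ := ENNReal.tsum_comp_le_tsum_of_injective Nat.cast_injective _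
  · obtain ⟨n, hn, hn'⟩ := exists_two_rpow_lt_le h0 htop
    calc a ^ p ≤ (2 ^ ((n : ℝ) + 1)) ^ p := by gcongr
      _ = 2 ^ (((n : ℝ) + 1) * p) := (ENNReal.rpow_mul _ _ _).symm
      _ ≤ _ := term_le hn

theorem tsum_indicator_Ioi_le {d : ℝ} (hd : 0 < d) (a : ℝ≥0∞) :
    ∑' k : ℤ, (Set.Ioi ((2 : ℝ≥0∞) ^ (k : ℝ))).indicator
      (fun _ => (2 : ℝ≥0∞) ^ ((k : ℝ) * d)) a ≤ geomSum d * a ^ d := by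
  rcases eq_or_ne a 0 with rfl | h0
  · simp
  rcases eq_or_ne a ∞ with rfl | htop
  · rw [ENNReal.top_rpow_of_pos hd, ENNReal.mul_top (geomSum_ne_zero d)]
    exact le_top
  obtain ⟨n, hn, hn'⟩ := exists_two_rpow_lt_le h0 htop
  have term_le (k : ℤ) : (Set.Ioi ((2 : ℝ≥0∞) ^ (k : ℝ))).indicator
      (fun _ => (2 : ℝ≥0∞) ^ ((k : ℝ) * d)) a
        ≤ 2 ^ (-d * |(n : ℝ) - (k : ℝ)|) * 2 ^ ((n : ℝ) * d) := by
    refine Set.indicator_apply_le' (fun hk => ?_) fun _ => zero_le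
    have hkn : (k : ℝ) < n + 1 := lt_of_not_ge fun h => (Set.mem_Ioi.1 hk).not_ge
      (hn'.trans (ENNReal.rpow_le_rpow_of_exponent_le one_le_two h))
    have hkn' : (k : ℝ) ≤ n := by exact_mod_cast Int.lt_add_one_iff.1 (by exact_mod_cast hkn)
    rw [← two_rpow_add, abs_of_nonneg (sub_nonneg.2 hkn')]
    ring_nf
    rfl
  calc _ ≤ ∑' k : ℤ, (2 : ℝ≥0∞) ^ (-d * |(n : ℝ) - (k : ℝ)|) * 2 ^ ((n : ℝ) * d) :=
        ENNReal.tsum_le_tsum term_le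
    _ = geomSum d * (2 ^ (n : ℝ)) ^ d := by
        rw [ENNReal.tsum_mul_right, tsum_two_rpow_neg_mul_abs_sub, ENNReal.rpow_mul]
    _ ≤ geomSum d * a ^ d := by gcongr

section StrongType

variable {μ : Measure ℝ} {f : ℝ → ℝ≥0∞}

theorem two_rpow_mul_measure_lt_intervalMax_le (hf : Measurable f) (p t : ℝ) :
    (2 : ℝ≥0∞) ^ ((t + 2) * p) * μ {x | 2 * 2 ^ t < intervalMax μ f x} ≤
      2 * 2 ^ (2 * p) * ∫⁻ y, (Set.Ioi ((2 : ℝ≥0∞) ^ t)).indicator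
        (fun _ => (2 : ℝ≥0∞) ^ (t * (p - 1))) (f y) * f y ∂μ := by
  have hfactor : (2 : ℝ≥0∞) ^ ((t + 2) * p) = 2 ^ (2 * p) * 2 ^ (t * (p - 1)) * 2 ^ t := by
    rw [← two_rpow_add, ← two_rpow_add]
    ring_nf
  have hint : ∫⁻ y, (Set.Ioi ((2 : ℝ≥0∞) ^ t)).indicator
      (fun _ => (2 : ℝ≥0∞) ^ (t * (p - 1))) (f y) * f y ∂μ
        = 2 ^ (t * (p - 1)) * ∫⁻ y, {y | 2 ^ t < f y}.indicator f y ∂μ := by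
    rw [← lintegral_const_mul _ (hf.indicator (measurableSet_lt measurable_const hf))]
    refine lintegral_congr fun y => ?_
    by_cases hy : (2 : ℝ≥0∞) ^ t < f y <;> simp [hy]
  calc _ = 2 ^ (2 * p) * 2 ^ (t * (p - 1)) *
        (2 ^ t * μ {x | 2 * 2 ^ t < intervalMax μ f x}) := by rw [hfactor, mul_assoc]
    _ ≤ 2 ^ (2 * p) * 2 ^ (t * (p - 1)) * (2 * ∫⁻ y, {y | 2 ^ t < f y}.indicator f y ∂μ) :=
        mul_le_mul_right (mul_measure_two_mul_lt_intervalMax_le hf _) _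
    _ = _ := by rw [hint]; ring

theorem exists_lintegral_intervalMax_rpow_le {p : ℝ} (hp : 1 < p) :
    ∃ C : ℝ≥0∞, C ≠ ∞ ∧ ∀ (μ : Measure ℝ) (f : ℝ → ℝ≥0∞), Measurable f →
      ∫⁻ x, intervalMax μ f x ^ p ∂μ ≤ C * ∫⁻ x, f x ^ p ∂μ := by
  refine ⟨2 * 2 ^ (2 * p) * geomSum (p - 1), ENNReal.mul_ne_top
    (ENNReal.mul_ne_top ofNat_ne_top (two_rpow_ne_top _)) (geomSum_ne_top (sub_pos.2 hp)), ?_⟩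
  intro μ f hf
  have meas_indicator (l c : ℝ≥0∞) {h : ℝ → ℝ≥0∞} (hh : Measurable h) :
      Measurable fun x => (Set.Ioi l).indicator (fun _ => c) (h x) :=
    (measurable_const.indicator measurableSet_Ioi).comp hh
  have hM := measurable_intervalMax μ f
  calc ∫⁻ x, intervalMax μ f x ^ p ∂μ
      ≤ ∫⁻ x, ∑' k : ℤ, (Set.Ioi (2 * (2 : ℝ≥0∞) ^ (k : ℝ))).indicator
          (fun _ => (2 : ℝ≥0∞) ^ (((k : ℝ) + 2) * p)) (intervalMax μ f x) ∂μ :=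
        lintegral_mono fun x => rpow_le_tsum_indicator_Ioi (by linarith) _
    _ = ∑' k : ℤ, (2 : ℝ≥0∞) ^ (((k : ℝ) + 2) * p) *
          μ {x | 2 * (2 : ℝ≥0∞) ^ (k : ℝ) < intervalMax μ f x} := by
        rw [lintegral_tsum fun k => (meas_indicator _ _ hM).aemeasurable]
        exact tsum_congr fun k => lintegral_indicator_const_comp hM measurableSet_Ioi _
    _ ≤ ∑' k : ℤ, 2 * 2 ^ (2 * p) * ∫⁻ y, (Set.Ioi ((2 : ℝ≥0∞) ^ (k : ℝ))).indicator
          (fun _ => (2 : ℝ≥0∞) ^ ((k : ℝ) * (p - 1))) (f y) * f y ∂μ :=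
        ENNReal.tsum_le_tsum fun k => two_rpow_mul_measure_lt_intervalMax_le hf p k
    _ = 2 * 2 ^ (2 * p) * ∫⁻ y, (∑' k : ℤ, (Set.Ioi ((2 : ℝ≥0∞) ^ (k : ℝ))).indicator
          (fun _ => (2 : ℝ≥0∞) ^ ((k : ℝ) * (p - 1))) (f y)) * f y ∂μ := by
        rw [ENNReal.tsum_mul_left, ← lintegral_tsum fun k =>
          ((meas_indicator _ _ hf).fun_mul hf).aemeasurable]
        simp_rw [ENNReal.tsum_mul_right]
    _ ≤ 2 * 2 ^ (2 * p) * ∫⁻ y, geomSum (p - 1) * f y ^ p ∂μ := by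
        refine mul_le_mul_right (lintegral_mono fun y => ?_) _
        calc _ ≤ geomSum (p - 1) * f y ^ (p - 1) * f y :=
              mul_le_mul_left (tsum_indicator_Ioi_le (by linarith) _) _
          _ = geomSum (p - 1) * (f y ^ (p - 1) * f y ^ (1 : ℝ)) := by
              rw [mul_assoc, ENNReal.rpow_one]
          _ = geomSum (p - 1) * f y ^ p := by
              rw [← ENNReal.rpow_add_of_nonneg _ _ (by linarith) zero_le_one, sub_add_cancel]
    _ = _ := by rw [lintegral_const_mul _ (hf.pow_const p), ← mul_assoc]

end StrongType

/-! ### Muckenhoupt weights -/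

theorem mul_rpow_sub_one {p : ℝ} (hp : 1 ≤ p) (x : ℝ≥0∞) : x * x ^ (p - 1) = x ^ p := by
  nth_rw 1 [← ENNReal.rpow_one x]
  rw [← ENNReal.rpow_add_of_nonneg _ _ zero_le_one (sub_nonneg.2 hp), add_sub_cancel]

theorem conjExponent_sub_one {p : ℝ} (hp : 1 < p) : p.conjExponent - 1 = (p - 1)⁻¹ := by
  have hp0 : p - 1 ≠ 0 := (sub_pos.2 hp).ne'
  rw [Real.conjExponent]
  field_simp
  ring

/-- A weight on `ℝ`: a measurable function with values in `(0, ∞)` almost everywhere. -/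
structure IsWeight (w : ℝ → ℝ≥0∞) : Prop where
  measurable : Measurable w
  ae_ne_zero : ∀ᵐ x, w x ≠ 0
  ae_ne_top : ∀ᵐ x, w x ≠ ∞

/-- A Muckenhoupt `A_p` weight with constant at most `K`. The condition
`⨍ w · (⨍ w ^ (-1/(p-1))) ^ (p-1) ≤ K` on the averages over an interval `(a, b)` is multiplied by
`(b - a) ^ p`, so that no averages occur. -/
structure IsApWeight (p : ℝ) (K : ℝ≥0∞) (w : ℝ → ℝ≥0∞) : Prop extends IsWeight w where
  lintegral_mul_rpow_le : ∀ a b, a < b → (∫⁻ x in Set.Ioo a b, w x) *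
    (∫⁻ x in Set.Ioo a b, w x ^ (-(p - 1)⁻¹)) ^ (p - 1) ≤ K * ENNReal.ofReal (b - a) ^ p

namespace IsWeight

variable {v w : ℝ → ℝ≥0∞}

theorem rpow (hw : IsWeight w) (t : ℝ) : IsWeight fun x => w x ^ t where
  measurable := hw.measurable.pow_const t
  ae_ne_zero := by
    filter_upwards [hw.ae_ne_zero, hw.ae_ne_top] with x h0 htop
    simp [ENNReal.rpow_eq_zero_iff, h0, htop]
  ae_ne_top := by
    filter_upwards [hw.ae_ne_zero, hw.ae_ne_top] with x h0 htop
    simp [ENNReal.rpow_eq_top_iff, h0, htop]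

theorem mul (hv : IsWeight v) (hw : IsWeight w) : IsWeight fun x => v x * w x where
  measurable := hv.measurable.mul hw.measurable
  ae_ne_zero := by
    filter_upwards [hv.ae_ne_zero, hw.ae_ne_zero] with x h h' using mul_ne_zero h h'
  ae_ne_top := by
    filter_upwards [hv.ae_ne_top, hw.ae_ne_top] with x h h' using ENNReal.mul_ne_top h h'

theorem min (hv : IsWeight v) (hw : IsWeight w) : IsWeight fun x => min (v x) (w x) where
  measurable := hv.measurable.min hw.measurable
  ae_ne_zero := by
    filter_upwards [hv.ae_ne_zero, hw.ae_ne_zero] with x h h'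
    exact (lt_min (pos_iff_ne_zero.2 h) (pos_iff_ne_zero.2 h')).ne'
  ae_ne_top := by
    filter_upwards [hv.ae_ne_top] with x h using ne_top_of_le_ne_top h (min_le_left _ _)

theorem setLIntegral_Ioo_ne_zero (hw : IsWeight w) {a b : ℝ} (hab : a < b) :
    ∫⁻ x in Set.Ioo a b, w x ≠ 0 := by
  refine ((setLIntegral_pos_iff hw.measurable).2 ?_).ne'
  rw [Measure.measure_inter_eq_of_ae (t := Function.support w) hw.ae_ne_zero, Real.volume_Ioo]
  exact ENNReal.ofReal_pos.2 (sub_pos.2 hab)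

theorem average_le_intervalMax_withDensity (hw : IsWeight w) {f : ℝ → ℝ≥0∞} (hf : Measurable f)
    {a b x : ℝ} (hx : x ∈ Set.Ioo a b) :
    (∫⁻ y in Set.Ioo a b, w y)⁻¹ * ∫⁻ y in Set.Ioo a b, f y ≤
      intervalMax (volume.withDensity w) (fun y => f y * (w y)⁻¹) x := by
  have hint : ∫⁻ y in Set.Ioo a b, f y * (w y)⁻¹ ∂volume.withDensity w
      = ∫⁻ y in Set.Ioo a b, f y := by
    have hfw : Measurable fun y => f y * (w y)⁻¹ := hf.mul hw.measurable.inv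
    rw [setLIntegral_withDensity_eq_setLIntegral_mul _ hw.measurable hfw measurableSet_Ioo]
    refine lintegral_congr_ae (ae_restrict_of_ae ?_)
    filter_upwards [hw.ae_ne_zero, hw.ae_ne_top] with y h0 htop
    rw [Pi.mul_apply, mul_left_comm, ENNReal.mul_inv_cancel h0 htop, mul_one]
  have h := average_le_intervalMax (μ := volume.withDensity w) (f := fun y => f y * (w y)⁻¹) hx
  rwa [hint, withDensity_apply _ measurableSet_Ioo] at h

end IsWeight

-- The strong-type inequality for the measure `w dx`, applied to `f / w`.
theorem exists_lintegral_intervalMax_withDensity_rpow_le {r : ℝ} (hr : 1 < r) :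
    ∃ C : ℝ≥0∞, C ≠ ∞ ∧ ∀ w, IsWeight w → ∀ f : ℝ → ℝ≥0∞, Measurable f →
      ∫⁻ x, intervalMax (volume.withDensity w) (fun y => f y * (w y)⁻¹) x ^ r * w x ≤
        C * ∫⁻ x, f x ^ r * w x ^ (1 - r) := by
  obtain ⟨C, hC, hM⟩ := exists_lintegral_intervalMax_rpow_le hr
  refine ⟨C, hC, fun w hw f hf => ?_⟩
  have hfw : Measurable fun y => f y * (w y)⁻¹ := hf.mul hw.measurable.inv
  have h := hM (volume.withDensity w) _ hfw
  rw [lintegral_withDensity_eq_lintegral_mul _ hw.measurable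
      ((measurable_intervalMax _ _).pow_const r),
    lintegral_withDensity_eq_lintegral_mul _ hw.measurable (hfw.pow_const r)] at h
  simp only [Pi.mul_apply, mul_comm (w _)] at h
  refine h.trans_eq (congrArg (C * ·) (lintegral_congr_ae ?_))
  filter_upwards [hw.ae_ne_zero, hw.ae_ne_top] with x h0 htop
  rw [ENNReal.mul_rpow_of_nonneg _ _ (by linarith), mul_assoc, ENNReal.inv_rpow, ← ENNReal.rpow_neg,
    sub_eq_neg_add, ENNReal.rpow_add _ _ h0 htop, ENNReal.rpow_one]

namespace IsApWeight

variable {p : ℝ} {K : ℝ≥0∞} {v w : ℝ → ℝ≥0∞}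

theorem congr (hv : IsApWeight p K v) (h : v =ᵐ[volume] w) (hw : Measurable w) :
    IsApWeight p K w where
  measurable := hw
  ae_ne_zero := by filter_upwards [hv.ae_ne_zero, h] with x h0 hx using hx ▸ h0
  ae_ne_top := by filter_upwards [hv.ae_ne_top, h] with x htop hx using hx ▸ htop
  lintegral_mul_rpow_le a b hab := by
    have hpow : (fun x => v x ^ (-(p - 1)⁻¹)) =ᵐ[volume] fun x => w x ^ (-(p - 1)⁻¹) :=
      h.mono fun x hx => congrArg (· ^ (-(p - 1)⁻¹)) hx
    rw [← lintegral_congr_ae (ae_restrict_of_ae h), ← lintegral_congr_ae (ae_restrict_of_ae hpow)]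
    exact hv.lintegral_mul_rpow_le a b hab

theorem mono (hw : IsApWeight p K w) {L : ℝ≥0∞} (hKL : K ≤ L) : IsApWeight p L w where
  toIsWeight := hw.toIsWeight
  lintegral_mul_rpow_le a b hab :=
    (hw.lintegral_mul_rpow_le a b hab).trans (mul_le_mul_left hKL _)

theorem setLIntegral_Ioo_ne_top (hp : 1 < p) (hK : K ≠ ∞) (hw : IsApWeight p K w) (a b : ℝ) :
    ∫⁻ x in Set.Ioo a b, w x ≠ ∞ := by
  rcases le_or_gt b a with hab | hab
  · simp [Set.Ioo_eq_empty hab.not_gt]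
  intro h
  have hdual : (∫⁻ x in Set.Ioo a b, w x ^ (-(p - 1)⁻¹)) ^ (p - 1) ≠ 0 := by
    simp [ENNReal.rpow_eq_zero_iff, (hw.rpow _).setLIntegral_Ioo_ne_zero hab, hp.le]
  have hle := hw.lintegral_mul_rpow_le a b hab
  rw [h, ENNReal.top_mul hdual] at hle
  exact ENNReal.mul_ne_top hK (by simp [(zero_lt_one.trans hp).le]) (top_le_iff.1 hle)

theorem dual (hp : 1 < p) (hw : IsApWeight p K w) :
    IsApWeight p.conjExponent (K ^ (p - 1)⁻¹) fun x => w x ^ (-(p - 1)⁻¹) where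
  toIsWeight := hw.rpow _
  lintegral_mul_rpow_le a b hab := by
    have hp0 : p - 1 ≠ 0 := (sub_pos.2 hp).ne'
    have h := ENNReal.rpow_le_rpow (hw.lintegral_mul_rpow_le a b hab)
      (inv_nonneg.2 (sub_pos.2 hp).le)
    simp only [conjExponent_sub_one hp, inv_inv, ← ENNReal.rpow_mul, neg_mul_neg,
      inv_mul_cancel₀ hp0, ENNReal.rpow_one]
    rw [ENNReal.mul_rpow_of_nonneg _ _ (inv_nonneg.2 (sub_pos.2 hp).le),
      ENNReal.mul_rpow_of_nonneg _ _ (inv_nonneg.2 (sub_pos.2 hp).le),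
      ENNReal.rpow_rpow_inv hp0, mul_comm, ← ENNReal.rpow_mul] at h
    exact h

theorem const_mul (hp : 1 < p) (hw : IsApWeight p K w) {c : ℝ≥0∞} (hc0 : c ≠ 0) (hc : c ≠ ∞) :
    IsApWeight p K fun x => c * w x where
  measurable := hw.measurable.const_mul c
  ae_ne_zero := hw.ae_ne_zero.mono fun _ => mul_ne_zero hc0
  ae_ne_top := hw.ae_ne_top.mono fun _ => ENNReal.mul_ne_top hc
  lintegral_mul_rpow_le a b hab := by
    have hp1 : 0 < p - 1 := sub_pos.2 hp
    have hcw (x) : (c * w x) ^ (-(p - 1)⁻¹) = c ^ (-(p - 1)⁻¹) * w x ^ (-(p - 1)⁻¹) := by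
      simp [ENNReal.mul_rpow_eq_ite, hc0, hc]
    have hcancel : (c ^ (-(p - 1)⁻¹)) ^ (p - 1) = c⁻¹ := by
      rw [← ENNReal.rpow_mul, neg_mul, inv_mul_cancel₀ hp1.ne', ENNReal.rpow_neg_one]
    simp_rw [hcw]
    rw [lintegral_const_mul _ hw.measurable, lintegral_const_mul _ (hw.measurable.pow_const _),
      ENNReal.mul_rpow_of_nonneg _ _ hp1.le, hcancel, mul_mul_mul_comm,
      ENNReal.mul_inv_cancel hc0 hc, one_mul]
    exact hw.lintegral_mul_rpow_le a b hab

-- The dual weight of `min v w` is at most the sum of the dual weights of `v` and `w`.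
theorem min (hp : 1 < p) (hv : IsApWeight p K v) (hw : IsApWeight p K w) :
    IsApWeight p ((ENNReal.ofReal (p - 1))⁻¹.LpAddConst * (2 * K)) fun x => min (v x) (w x) where
  toIsWeight := hv.toIsWeight.min hw.toIsWeight
  lintegral_mul_rpow_le a b hab := by
    have hp1 : 0 ≤ p - 1 := (sub_pos.2 hp).le
    set V := ∫⁻ x in Set.Ioo a b, v x ^ (-(p - 1)⁻¹) with hV
    set W := ∫⁻ x in Set.Ioo a b, w x ^ (-(p - 1)⁻¹) with hW
    set M := ∫⁻ x in Set.Ioo a b, Min.min (v x) (w x)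
    have hdual : ∫⁻ x in Set.Ioo a b, Min.min (v x) (w x) ^ (-(p - 1)⁻¹) ≤ V + W := by
      rw [hV, hW, ← lintegral_add_left (hv.measurable.pow_const _)]
      refine lintegral_mono fun x => ?_
      rcases min_choice (v x) (w x) with h | h <;> rw [h]
      · exact le_self_add
      · exact le_add_self
    have hMV : M * V ^ (p - 1) ≤ K * ENNReal.ofReal (b - a) ^ p :=
      (mul_le_mul_left (lintegral_mono fun x => min_le_left _ _) _).trans
        (hv.lintegral_mul_rpow_le a b hab)
    have hMW : M * W ^ (p - 1) ≤ K * ENNReal.ofReal (b - a) ^ p :=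
      (mul_le_mul_left (lintegral_mono fun x => min_le_right _ _) _).trans
        (hw.lintegral_mul_rpow_le a b hab)
    calc M * (∫⁻ x in Set.Ioo a b, Min.min (v x) (w x) ^ (-(p - 1)⁻¹)) ^ (p - 1)
        ≤ M * ((ENNReal.ofReal (p - 1))⁻¹.LpAddConst * (V ^ (p - 1) + W ^ (p - 1))) :=
          mul_le_mul_right ((ENNReal.rpow_le_rpow hdual hp1).trans
            (ENNReal.rpow_add_le_mul_rpow_add_rpow' _ _ hp1)) _
      _ = (ENNReal.ofReal (p - 1))⁻¹.LpAddConst * (M * V ^ (p - 1) + M * W ^ (p - 1)) := by ring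
      _ ≤ _ := mul_le_mul_right (add_le_add hMV hMW) _
      _ = _ := by ring

theorem one (hp : 1 < p) : IsApWeight p 1 fun _ => 1 where
  measurable := measurable_const
  ae_ne_zero := .of_forall fun _ => one_ne_zero
  ae_ne_top := .of_forall fun _ => one_ne_top
  lintegral_mul_rpow_le a b _ := by simp [mul_rpow_sub_one hp.le]

theorem average_rpow_le (hp : 1 < p) (hK : K ≠ ∞) (hw : IsApWeight p K w) {a b : ℝ} (hab : a < b)
    (F : ℝ≥0∞) :
    ((ENNReal.ofReal (b - a))⁻¹ * F) ^ (p - 1) ≤ K * ((∫⁻ x in Set.Ioo a b, w x)⁻¹ *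
      (ENNReal.ofReal (b - a) * ((∫⁻ x in Set.Ioo a b, w x ^ (-(p - 1)⁻¹))⁻¹ * F) ^ (p - 1))) := by
  have hp1 : 0 < p - 1 := sub_pos.2 hp
  have hL0 : ENNReal.ofReal (b - a) ≠ 0 := (ENNReal.ofReal_pos.2 (sub_pos.2 hab)).ne'
  have hle := hw.lintegral_mul_rpow_le a b hab
  have hW0 := hw.setLIntegral_Ioo_ne_zero hab
  have hWtop := hw.setLIntegral_Ioo_ne_top hp hK a b
  have hS0 := (hw.rpow (-(p - 1)⁻¹)).setLIntegral_Ioo_ne_zero hab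
  have hStop := (hw.dual hp).setLIntegral_Ioo_ne_top (p := p.conjExponent)
    (Real.HolderConjugate.conjExponent hp).symm.lt
    (ENNReal.rpow_ne_top_of_nonneg (inv_nonneg.2 hp1.le) hK) a b
  set L := ENNReal.ofReal (b - a)
  set W := ∫⁻ x in Set.Ioo a b, w x
  set S := (∫⁻ x in Set.Ioo a b, w x ^ (-(p - 1)⁻¹))
  have hSp0 : S ^ (p - 1) ≠ 0 := by simp [ENNReal.rpow_eq_zero_iff, hS0, hStop]
  have hSptop : S ^ (p - 1) ≠ ∞ := by simp [ENNReal.rpow_eq_top_iff, hS0, hStop]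
  rw [ENNReal.mul_rpow_of_nonneg _ _ hp1.le, ENNReal.mul_rpow_of_nonneg _ _ hp1.le,
    ENNReal.inv_rpow, ENNReal.inv_rpow]
  calc (L ^ (p - 1))⁻¹ * F ^ (p - 1)
      = (L ^ (p - 1))⁻¹ * (W * S ^ (p - 1)) * (W⁻¹ * (S ^ (p - 1))⁻¹) * F ^ (p - 1) := by
        rw [mul_assoc _ (W * _), mul_mul_mul_comm, ENNReal.mul_inv_cancel hW0 hWtop,
          ENNReal.mul_inv_cancel hSp0 hSptop, one_mul, mul_one]
    _ ≤ (L ^ (p - 1))⁻¹ * (K * (L * L ^ (p - 1))) * (W⁻¹ * (S ^ (p - 1))⁻¹) * F ^ (p - 1) := by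
        rw [mul_rpow_sub_one hp.le]
        gcongr
    _ = (L ^ (p - 1) * (L ^ (p - 1))⁻¹) * (K * (W⁻¹ * (L * ((S ^ (p - 1))⁻¹ * F ^ (p - 1))))) := by
        ring
    _ ≤ _ := mul_le_of_le_one_left' (ENNReal.mul_inv_le_one _)

end IsApWeight

/-! ### The weighted maximal inequality -/

-- With `σ = w ^ (-1/(p-1))`, an average of `f` is controlled by the `σ`-average of `f / σ`, and the
-- latter is at most the maximal function `φ` of `f / σ` throughout the interval.
theorem IsApWeight.intervalMax_rpow_le {p : ℝ} {K : ℝ≥0∞} {w f : ℝ → ℝ≥0∞} (hp : 1 < p)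
    (hK : K ≠ ∞) (hw : IsApWeight p K w) (hf : Measurable f) (x : ℝ) :
    intervalMax volume f x ^ (p - 1) ≤ K * intervalMax (volume.withDensity w)
      (fun y => intervalMax (volume.withDensity fun y => w y ^ (-(p - 1)⁻¹))
        (fun z => f z * (w z ^ (-(p - 1)⁻¹))⁻¹) y ^ (p - 1) * (w y)⁻¹) x := by
  have hp1 : 0 < p - 1 := sub_pos.2 hp
  rw [← ENNReal.le_rpow_inv_iff hp1]
  refine intervalMax_le_iff.2 fun a b hx => ?_
  rw [ENNReal.le_rpow_inv_iff hp1, Real.volume_Ioo]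
  set φ := intervalMax (volume.withDensity fun y => w y ^ (-(p - 1)⁻¹))
    fun z => f z * (w z ^ (-(p - 1)⁻¹))⁻¹
  have hφ : Measurable φ := measurable_intervalMax _ _
  refine (hw.average_rpow_le hp hK (hx.1.trans hx.2) _).trans (mul_le_mul_right ?_ K)
  refine le_trans ?_
    (hw.average_le_intervalMax_withDensity (hφ.pow_const (p - 1)) hx)
  gcongr
  rw [mul_comm, ← Real.volume_Ioo, ← setLIntegral_const]
  refine setLIntegral_mono' measurableSet_Ioo fun y hy => ?_
  gcongr
  exact (hw.rpow _).average_le_intervalMax_withDensity hf hy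

-- Lerner's argument: apply the unweighted inequality for the measures `w dx` and `σ dx`.
theorem exists_lintegral_intervalMax_rpow_mul_weight_le {p : ℝ} (hp : 1 < p) {K : ℝ≥0∞}
    (hK : K ≠ ∞) :
    ∃ C : ℝ≥0∞, C ≠ ∞ ∧ ∀ w, IsApWeight p K w → ∀ f : ℝ → ℝ≥0∞, Measurable f →
      ∫⁻ x, intervalMax volume f x ^ p * w x ≤ C * ∫⁻ x, f x ^ p * w x := by
  have hp1 : 0 < p - 1 := sub_pos.2 hp
  have hpq : p.HolderConjugate p.conjExponent := .conjExponent hp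
  set q := p.conjExponent
  obtain ⟨C₁, hC₁, hσ⟩ := exists_lintegral_intervalMax_withDensity_rpow_le hp
  obtain ⟨C₂, hC₂, hw⟩ := exists_lintegral_intervalMax_withDensity_rpow_le hpq.symm.lt
  refine ⟨K ^ q * (C₂ * C₁), ENNReal.mul_ne_top (ENNReal.rpow_ne_top_of_nonneg hpq.symm.nonneg hK)
    (ENNReal.mul_ne_top hC₂ hC₁), fun w hwA f hf => ?_⟩
  set σ : ℝ → ℝ≥0∞ := fun x => w x ^ (-(p - 1)⁻¹)
  set φ := intervalMax (volume.withDensity σ) fun y => f y * (σ y)⁻¹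
  set ψ := intervalMax (volume.withDensity w) fun y => φ y ^ (p - 1) * (w y)⁻¹
  have hφ : Measurable φ := measurable_intervalMax _ _
  have hψ : Measurable ψ := measurable_intervalMax _ _
  have hexp : (p - 1) * q = p := hpq.sub_one_mul_conj
  have hσq (x) : w x ^ (1 - q) = σ x := by
    rw [← neg_sub, conjExponent_sub_one hp]
  have hσp (x) : σ x ^ (1 - p) = w x := by
    rw [← ENNReal.rpow_mul, ← neg_sub p, neg_mul_neg, inv_mul_cancel₀ hp1.ne', ENNReal.rpow_one]
  calc ∫⁻ x, intervalMax volume f x ^ p * w x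
      ≤ ∫⁻ x, K ^ q * (ψ x ^ q * w x) := by
        refine lintegral_mono fun x => ?_
        rw [← mul_assoc, ← ENNReal.mul_rpow_of_nonneg _ _ hpq.symm.nonneg]
        nth_rw 1 [← hexp]
        rw [ENNReal.rpow_mul]
        gcongr
        · exact hpq.symm.nonneg
        · exact hwA.intervalMax_rpow_le hp hK hf x
    _ = K ^ q * ∫⁻ x, ψ x ^ q * w x :=
        lintegral_const_mul _ ((hψ.pow_const q).mul hwA.measurable)
    _ ≤ K ^ q * (C₂ * ∫⁻ x, (φ x ^ (p - 1)) ^ q * w x ^ (1 - q)) := by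
        gcongr
        exact hw w hwA.toIsWeight _ (hφ.pow_const _)
    _ = K ^ q * (C₂ * ∫⁻ x, φ x ^ p * σ x) := by
        simp_rw [← ENNReal.rpow_mul, hexp, hσq]
    _ ≤ K ^ q * (C₂ * (C₁ * ∫⁻ x, f x ^ p * σ x ^ (1 - p))) := by
        gcongr
        exact hσ σ (hwA.rpow _) f hf
    _ = K ^ q * (C₂ * C₁) * ∫⁻ x, f x ^ p * w x := by
        simp_rw [hσp, mul_assoc]

/-! ### `A_1` weights and the Rubio de Francia iteration -/

/-- A Muckenhoupt `A_1` weight with constant at most `C`, with the defining inequality required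
at every point rather than almost everywhere. -/
structure IsA1Weight (C : ℝ≥0∞) (u : ℝ → ℝ≥0∞) : Prop extends IsWeight u where
  intervalMax_le : ∀ x, intervalMax volume u x ≤ C * u x

theorem IsA1Weight.inv_le {C : ℝ≥0∞} {u : ℝ → ℝ≥0∞} (hC : C ≠ ∞) (hu : IsA1Weight C u)
    {a b x : ℝ} (hx : x ∈ Set.Ioo a b) :
    (u x)⁻¹ ≤ C * ENNReal.ofReal (b - a) * (∫⁻ y in Set.Ioo a b, u y)⁻¹ := by
  have hab : a < b := hx.1.trans hx.2
  have hle := (average_le_intervalMax hx).trans (hu.intervalMax_le x)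
  have hU0 := hu.setLIntegral_Ioo_ne_zero hab
  have hL0 : ENNReal.ofReal (b - a) ≠ 0 := (ENNReal.ofReal_pos.2 (sub_pos.2 hab)).ne'
  rw [Real.volume_Ioo] at hle
  set U := ∫⁻ y in Set.Ioo a b, u y
  set L := ENNReal.ofReal (b - a)
  rcases eq_or_ne U ∞ with hU | hU
  · have hux : u x = ∞ := by
      by_contra h
      rw [hU, ENNReal.mul_top (ENNReal.inv_ne_zero.2 ofReal_ne_top)] at hle
      exact ENNReal.mul_ne_top hC h (top_le_iff.1 hle)
    simp [hux]
  · calc (u x)⁻¹ = (u x)⁻¹ * (L⁻¹ * U) * (L * U⁻¹) := by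
          rw [mul_assoc, mul_mul_mul_comm, ENNReal.inv_mul_cancel hL0 ofReal_ne_top,
            ENNReal.mul_inv_cancel hU0 hU, one_mul, mul_one]
      _ ≤ (u x)⁻¹ * (C * u x) * (L * U⁻¹) := by gcongr
      _ = ((u x)⁻¹ * u x) * (C * L * U⁻¹) := by ring
      _ ≤ C * L * U⁻¹ := mul_le_of_le_one_left' (ENNReal.inv_mul_le_one _)

-- The easy half of the Jones factorization theorem.
theorem IsA1Weight.mul_rpow {A B : ℝ≥0∞} {u v : ℝ → ℝ≥0∞} (hA : A ≠ ∞) (hB : B ≠ ∞)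
    (hu : IsA1Weight A u) (hv : IsA1Weight B v) {p : ℝ} (hp : 1 < p) :
    IsApWeight p (A * B ^ (p - 1)) fun x => u x * v x ^ (1 - p) where
  toIsWeight := hu.toIsWeight.mul (hv.toIsWeight.rpow _)
  lintegral_mul_rpow_le a b _ := by
    have hp1 : 0 < p - 1 := sub_pos.2 hp
    set L := ENNReal.ofReal (b - a)
    set U := ∫⁻ x in Set.Ioo a b, u x with hU
    set V := ∫⁻ x in Set.Ioo a b, v x with hV
    have hdual : ∀ᵐ x, (u x * v x ^ (1 - p)) ^ (-(p - 1)⁻¹) = v x * (u x)⁻¹ ^ (p - 1)⁻¹ := by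
      filter_upwards [hu.ae_ne_top, hv.ae_ne_zero, hv.ae_ne_top] with x hux hv0 hvx
      have hexp : (1 - p) * -(p - 1)⁻¹ = 1 := by
        rw [← neg_sub, neg_mul_neg, mul_inv_cancel₀ hp1.ne']
      rw [ENNReal.mul_rpow_of_ne_top hux (by simp [ENNReal.rpow_eq_top_iff, hv0, hvx]),
        ← ENNReal.rpow_mul, hexp, ENNReal.rpow_one, ENNReal.rpow_neg, ENNReal.inv_rpow, mul_comm]
    have hleft : ∫⁻ x in Set.Ioo a b, u x * v x ^ (1 - p) ≤ U * (B * L * V⁻¹) ^ (p - 1) := by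
      rw [hU, ← lintegral_mul_const _ hu.measurable]
      refine setLIntegral_mono' measurableSet_Ioo fun x hx => ?_
      rw [← neg_sub p, ENNReal.rpow_neg, ← ENNReal.inv_rpow]
      gcongr
      exact hv.inv_le hB hx
    have hright : ∫⁻ x in Set.Ioo a b, (u x * v x ^ (1 - p)) ^ (-(p - 1)⁻¹) ≤
        V * (A * L * U⁻¹) ^ (p - 1)⁻¹ := by
      rw [lintegral_congr_ae (ae_restrict_of_ae hdual), hV, ← lintegral_mul_const _ hv.measurable]
      refine setLIntegral_mono' measurableSet_Ioo fun x hx => ?_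
      gcongr
      exact hu.inv_le hA hx
    calc _ ≤ U * (B * L * V⁻¹) ^ (p - 1) * (V * (A * L * U⁻¹) ^ (p - 1)⁻¹) ^ (p - 1) := by gcongr
      _ = U * U⁻¹ * (V * V⁻¹) ^ (p - 1) * (A * B ^ (p - 1) * (L * L ^ (p - 1))) := by
        simp only [ENNReal.mul_rpow_of_nonneg _ _ hp1.le, ENNReal.rpow_inv_rpow hp1.ne']
        ring
      _ ≤ 1 * 1 ^ (p - 1) * (A * B ^ (p - 1) * L ^ p) := by
        rw [mul_rpow_sub_one hp.le]
        gcongr <;> exact ENNReal.mul_inv_le_one _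
      _ = A * B ^ (p - 1) * L ^ p := by rw [ENNReal.one_rpow, one_mul, one_mul]

theorem intervalMax_volume_ne_zero {h : ℝ → ℝ≥0∞} (hh : ∫⁻ x, h x ≠ 0) (x : ℝ) :
    intervalMax volume h x ≠ 0 := by
  intro hM
  have hU : ⋃ n : ℕ, Set.Ioo (x - (n + 1)) (x + (n + 1)) = Set.univ := by
    refine Set.eq_univ_of_forall fun y => ?_
    obtain ⟨n, hn⟩ := exists_nat_gt |y - x|
    have hn' := abs_lt.1 hn
    exact Set.mem_iUnion.2 ⟨n, by constructor <;> linarith⟩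
  refine hh (le_antisymm ?_ zero_le)
  rw [← setLIntegral_univ, ← hU]
  refine (lintegral_iUnion_le _ _).trans_eq (ENNReal.tsum_eq_zero.2 fun n => ?_)
  have hx : x ∈ Set.Ioo (x - (n + 1 : ℝ)) (x + (n + 1)) := by constructor <;> linarith
  have hle := average_le_intervalMax (μ := volume) (f := h) hx
  rw [hM, nonpos_iff_eq_zero, mul_eq_zero] at hle
  exact hle.resolve_left (ENNReal.inv_ne_zero.2 (by simp))

theorem measurable_iterate_intervalMax {h : ℝ → ℝ≥0∞} (hh : Measurable h) :
    ∀ k : ℕ, Measurable ((intervalMax volume)^[k] h)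
  | 0 => hh
  | k + 1 => by
    rw [Function.iterate_succ_apply']
    exact measurable_intervalMax _ _

/-- The Rubio de Francia iteration `∑ A⁻ᵏ Mᵏ h` of the maximal operator `M`. If `M` is bounded by
a small multiple of `A` on a weighted `L^s` space, this is an `A_1` majorant of `h` there. -/
def rubioDeFrancia (A : ℝ≥0∞) (h : ℝ → ℝ≥0∞) (x : ℝ) : ℝ≥0∞ :=
  ∑' k : ℕ, A⁻¹ ^ k * (intervalMax volume)^[k] h x

theorem measurable_rubioDeFrancia (A : ℝ≥0∞) {h : ℝ → ℝ≥0∞} (hh : Measurable h) :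
    Measurable (rubioDeFrancia A h) :=
  .tsum fun k => (measurable_iterate_intervalMax hh k).const_mul _

theorem le_rubioDeFrancia (A : ℝ≥0∞) (h : ℝ → ℝ≥0∞) (x : ℝ) : h x ≤ rubioDeFrancia A h x := by
  simpa [rubioDeFrancia] using
    ENNReal.le_tsum (f := fun k => A⁻¹ ^ k * (intervalMax volume)^[k] h x) 0

theorem rubioDeFrancia_ne_zero {A : ℝ≥0∞} (hA : A ≠ ∞) {h : ℝ → ℝ≥0∞} (hh : ∫⁻ x, h x ≠ 0)
    (x : ℝ) : rubioDeFrancia A h x ≠ 0 := by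
  have hle := ENNReal.le_tsum (f := fun k => A⁻¹ ^ k * (intervalMax volume)^[k] h x) 1
  refine ne_bot_of_le_ne_bot ?_ hle
  simpa [hA] using intervalMax_volume_ne_zero hh x

theorem intervalMax_rubioDeFrancia_le {A : ℝ≥0∞} (hA0 : A ≠ 0) (hA : A ≠ ∞) {h : ℝ → ℝ≥0∞}
    (hh : Measurable h) (x : ℝ) :
    intervalMax volume (rubioDeFrancia A h) x ≤ A * rubioDeFrancia A h x := by
  have hm := measurable_iterate_intervalMax hh
  calc intervalMax volume (rubioDeFrancia A h) x
      ≤ ∑' k : ℕ, A⁻¹ ^ k * intervalMax volume ((intervalMax volume)^[k] h) x :=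
        (intervalMax_tsum_le (fun k => ((hm k).const_mul _).aemeasurable) x).trans
          (ENNReal.tsum_le_tsum fun k => intervalMax_const_mul_le _ (hm k).aemeasurable x)
    _ = ∑' k : ℕ, A * (A⁻¹ ^ (k + 1) * (intervalMax volume)^[k + 1] h x) := by
        refine tsum_congr fun k => ?_
        rw [Function.iterate_succ_apply', ← mul_assoc, pow_succ', ← mul_assoc,
          ENNReal.mul_inv_cancel hA0 hA, one_mul]
    _ ≤ A * rubioDeFrancia A h x := by
        rw [ENNReal.tsum_mul_left]
        gcongr
        exact ENNReal.tsum_comp_le_tsum_of_injective (add_left_injective 1)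
          fun k => A⁻¹ ^ k * (intervalMax volume)^[k] h x

theorem tsum_mul_rpow_le {ι : Type*} {s : ℝ} (hs : 0 < s) (c y : ι → ℝ≥0∞) :
    (∑' k, c k * y k) ^ s ≤ (∑' k, c k) ^ s * ∑' k, y k ^ s := by
  have hy (k) : y k ≤ (∑' k, y k ^ s) ^ s⁻¹ := by
    rw [ENNReal.le_rpow_inv_iff hs]
    exact ENNReal.le_tsum k
  calc (∑' k, c k * y k) ^ s ≤ (∑' k, c k * (∑' k, y k ^ s) ^ s⁻¹) ^ s := by
        gcongr with k
        exact hy k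
    _ = _ := by
        rw [ENNReal.tsum_mul_right, ENNReal.mul_rpow_of_nonneg _ _ hs.le,
          ENNReal.rpow_inv_rpow hs.ne']

theorem lintegral_iterate_intervalMax_rpow_le {s : ℝ} {B : ℝ≥0∞} {w h : ℝ → ℝ≥0∞}
    (hM : ∀ f, Measurable f →
      ∫⁻ x, intervalMax volume f x ^ s * w x ≤ B * ∫⁻ x, f x ^ s * w x) (hh : Measurable h) :
    ∀ k : ℕ, ∫⁻ x, (intervalMax volume)^[k] h x ^ s * w x ≤ B ^ k * ∫⁻ x, h x ^ s * w x
  | 0 => by simp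
  | k + 1 => by
    rw [Function.iterate_succ_apply', pow_succ', mul_assoc]
    exact (hM _ (measurable_iterate_intervalMax hh k)).trans
      (mul_le_mul_right (lintegral_iterate_intervalMax_rpow_le hM hh k) B)

theorem rubioDeFrancia_four_mul_rpow_le {s : ℝ} (hs : 0 < s) (B : ℝ≥0∞) (h : ℝ → ℝ≥0∞) (x : ℝ) :
    rubioDeFrancia (4 * B) h x ^ s ≤
      2 ^ s * ∑' k : ℕ, ((2 * B)⁻¹ ^ k) ^ s * (intervalMax volume)^[k] h x ^ s := by
  have hcoef (k : ℕ) : (4 * B)⁻¹ ^ k = 2⁻¹ ^ k * (2 * B)⁻¹ ^ k := by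
    rw [← mul_pow, ← ENNReal.mul_inv (by simp) (by simp), ← mul_assoc]
    norm_num
  have hgeom : ∑' k : ℕ, (2 : ℝ≥0∞)⁻¹ ^ k = 2 := by
    rw [ENNReal.tsum_geometric, ENNReal.one_sub_inv_two, inv_inv]
  simp only [rubioDeFrancia, hcoef, mul_assoc, ← ENNReal.mul_rpow_of_nonneg _ _ hs.le]
  exact (tsum_mul_rpow_le hs _ _).trans_eq (by rw [hgeom])

theorem exists_lintegral_rubioDeFrancia_rpow_le {s : ℝ} (hs : 0 < s) :
    ∃ C : ℝ≥0∞, C ≠ ∞ ∧ ∀ (B : ℝ≥0∞) (w : ℝ → ℝ≥0∞), Measurable w →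
      (∀ f, Measurable f →
        ∫⁻ x, intervalMax volume f x ^ s * w x ≤ B ^ s * ∫⁻ x, f x ^ s * w x) →
      ∀ h, Measurable h →
        ∫⁻ x, rubioDeFrancia (4 * B) h x ^ s * w x ≤ C * ∫⁻ x, h x ^ s * w x := by
  refine ⟨2 ^ s * ∑' k : ℕ, ((2 : ℝ≥0∞)⁻¹ ^ s) ^ k, ?_, fun B w hw hM h hh => ?_⟩
  · have hlt : (2 : ℝ≥0∞)⁻¹ ^ s < 1 := ENNReal.rpow_lt_one (by simp) hs
    rw [ENNReal.tsum_geometric]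
    exact ENNReal.mul_ne_top (ENNReal.rpow_ne_top_of_nonneg hs.le ofNat_ne_top)
      (ENNReal.inv_ne_top.2 (tsub_pos_of_lt hlt).ne')
  have hmw (k : ℕ) : Measurable fun x => (intervalMax volume)^[k] h x ^ s * w x :=
    ((measurable_iterate_intervalMax hh k).pow_const s).mul hw
  have hcancel (k : ℕ) : ((2 * B)⁻¹ ^ k) ^ s * (B ^ s) ^ k ≤ ((2 : ℝ≥0∞)⁻¹ ^ s) ^ k := by
    rw [← ENNReal.rpow_natCast_mul, mul_comm (k : ℝ), ENNReal.rpow_mul_natCast, ← mul_pow,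
      ← ENNReal.mul_rpow_of_nonneg _ _ hs.le, ENNReal.mul_inv (by simp) (by simp), mul_assoc]
    gcongr
    exact mul_le_of_le_one_right' (ENNReal.inv_mul_le_one B)
  calc ∫⁻ x, rubioDeFrancia (4 * B) h x ^ s * w x
      ≤ ∫⁻ x, 2 ^ s * ∑' k : ℕ,
          ((2 * B)⁻¹ ^ k) ^ s * ((intervalMax volume)^[k] h x ^ s * w x) := by
        refine lintegral_mono fun x => ?_
        refine (mul_le_mul_left (rubioDeFrancia_four_mul_rpow_le hs B h x) (w x)).trans_eq ?_
        simp only [mul_assoc, ← ENNReal.tsum_mul_right]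
    _ = 2 ^ s * ∑' k : ℕ,
          ((2 * B)⁻¹ ^ k) ^ s * ∫⁻ x, (intervalMax volume)^[k] h x ^ s * w x := by
        rw [lintegral_const_mul _ (.tsum fun k => (hmw k).const_mul _),
          lintegral_tsum fun k => ((hmw k).const_mul _).aemeasurable]
        simp_rw [lintegral_const_mul _ (hmw _)]
    _ ≤ 2 ^ s * ∑' k : ℕ, ((2 : ℝ≥0∞)⁻¹ ^ s) ^ k * ∫⁻ x, h x ^ s * w x := by
        gcongr 2 ^ s * ∑' k : ℕ, ?_ with k
        refine (mul_le_mul_right (lintegral_iterate_intervalMax_rpow_le hM hh k) _).trans ?_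
        rw [← mul_assoc]
        gcongr
        exact hcancel k
    _ = _ := by rw [ENNReal.tsum_mul_right, mul_assoc]

theorem exists_isA1Weight_ge {s : ℝ} (hs : 1 < s) {K : ℝ≥0∞} (hK : K ≠ ∞) :
    ∃ A : ℝ≥0∞, A ≠ ∞ ∧ ∃ C : ℝ≥0∞, C ≠ ∞ ∧ ∀ w, IsApWeight s K w → ∀ h : ℝ → ℝ≥0∞,
      Measurable h → ∫⁻ x, h x ≠ 0 → ∫⁻ x, h x ^ s * w x ≠ ∞ →
      ∃ u, IsA1Weight A u ∧ (∀ x, h x ≤ u x) ∧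
        ∫⁻ x, u x ^ s * w x ≤ C * ∫⁻ x, h x ^ s * w x := by
  have hs0 : 0 < s := zero_lt_one.trans hs
  obtain ⟨D, hD, hM⟩ := exists_lintegral_intervalMax_rpow_mul_weight_le hs hK
  obtain ⟨C, hC, hR⟩ := exists_lintegral_rubioDeFrancia_rpow_le hs0
  set B := (D + 1) ^ s⁻¹
  have hB0 : B ≠ 0 := (ENNReal.rpow_pos (by simp) (by simp [hD])).ne'
  have hB : B ≠ ∞ := ENNReal.rpow_ne_top_of_nonneg (by positivity) (by simp [hD])
  have hA0 : 4 * B ≠ 0 := mul_ne_zero (by simp) hB0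
  have hA : 4 * B ≠ ∞ := ENNReal.mul_ne_top (by simp) hB
  refine ⟨4 * B, hA, C, hC, fun w hw h hh hh0 hfin => ?_⟩
  have hu := measurable_rubioDeFrancia (4 * B) hh
  have hle : ∫⁻ x, rubioDeFrancia (4 * B) h x ^ s * w x ≤ C * ∫⁻ x, h x ^ s * w x := by
    refine hR B w hw.measurable (fun f hf => (hM w hw f hf).trans ?_) h hh
    rw [ENNReal.rpow_inv_rpow hs0.ne']
    gcongr
    exact le_self_add
  refine ⟨rubioDeFrancia (4 * B) h,
    ⟨⟨hu, .of_forall (rubioDeFrancia_ne_zero hA hh0), ?_⟩, intervalMax_rubioDeFrancia_le hA0 hA hh⟩,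
    le_rubioDeFrancia _ h, hle⟩
  filter_upwards [hw.ae_ne_zero, ae_lt_top ((hu.pow_const s).mul hw.measurable)
    (ne_top_of_le_ne_top (ENNReal.mul_ne_top hC hfin) hle)] with x hw0 hx htop
  simp [htop, ENNReal.top_rpow_of_pos hs0, ENNReal.top_mul hw0] at hx

/-! ### Extrapolation -/

/-- The pairs `(F, G) ∈ 𝓕` satisfy `∫ F^p w ≤ C ∫ G^p w` for all `A_p` weights `w`, where `C`
depends only on the `A_p` constant of `w`. -/
structure WeightedBounded (p : ℝ) (𝓕 : Set ((ℝ → ℝ≥0∞) × (ℝ → ℝ≥0∞))) : Prop where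
  measurable_fst : ∀ P ∈ 𝓕, Measurable P.1
  measurable_snd : ∀ P ∈ 𝓕, Measurable P.2
  exists_lintegral_le : ∀ K : ℝ≥0∞, K ≠ ∞ → ∃ C : ℝ≥0∞, C ≠ ∞ ∧ ∀ w, IsApWeight p K w →
    ∀ P ∈ 𝓕, ∫⁻ x, P.1 x ^ p * w x ≤ C * ∫⁻ x, P.2 x ^ p * w x

theorem lintegral_mul_mul_le_of_eq_rpow_mul_rpow {X : Type*} [MeasurableSpace X] {μ : Measure X}
    {p q : ℝ} (hpq : p.HolderConjugate q) {f g v w ρ : X → ℝ≥0∞} (hf : Measurable f)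
    (hg : Measurable g) (hv : Measurable v) (hw : Measurable w)
    (hρ : ∀ᵐ x ∂μ, ρ x = v x ^ p⁻¹ * w x ^ q⁻¹) :
    ∫⁻ x, f x * g x * ρ x ∂μ ≤
      (∫⁻ x, f x ^ p * v x ∂μ) ^ p⁻¹ * (∫⁻ x, g x ^ q * w x ∂μ) ^ q⁻¹ := by
  have h := ENNReal.lintegral_mul_le_Lp_mul_Lq μ hpq
    (hf.mul (hv.pow_const p⁻¹)).aemeasurable (hg.mul (hw.pow_const q⁻¹)).aemeasurable
  simp only [Pi.mul_apply, one_div, ENNReal.mul_rpow_of_nonneg _ _ hpq.nonneg,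
    ENNReal.mul_rpow_of_nonneg _ _ hpq.symm.nonneg, ENNReal.rpow_inv_rpow hpq.ne_zero,
    ENNReal.rpow_inv_rpow hpq.symm.ne_zero] at h
  refine (lintegral_congr_ae ?_).trans_le h
  filter_upwards [hρ] with x hx
  rw [hx, mul_mul_mul_comm]

theorem IsWeight.lintegral_mul_le {s : ℝ} (hs : 1 < s) {f g w : ℝ → ℝ≥0∞} (hw : IsWeight w)
    (hf : Measurable f) (hg : Measurable g) :
    ∫⁻ x, f x * g x ≤ (∫⁻ x, f x ^ s * w x) ^ s⁻¹ *
      (∫⁻ x, g x ^ s.conjExponent * w x ^ (-(s - 1)⁻¹)) ^ s.conjExponent⁻¹ := by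
  have hconj : s.HolderConjugate s.conjExponent := .conjExponent hs
  have hsplit : ∀ᵐ x, (1 : ℝ≥0∞) = w x ^ s⁻¹ * (w x ^ (-(s - 1)⁻¹)) ^ s.conjExponent⁻¹ := by
    filter_upwards [hw.ae_ne_zero, hw.ae_ne_top] with x h0 htop
    have hexp : s⁻¹ + -(s - 1)⁻¹ * s.conjExponent⁻¹ = 0 := by
      have := hconj.ne_zero
      have := hconj.sub_one_ne_zero
      rw [Real.conjExponent]
      field_simp
      ring
    rw [← ENNReal.rpow_mul, ← ENNReal.rpow_add _ _ h0 htop, hexp, ENNReal.rpow_zero]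
  simpa only [mul_one] using lintegral_mul_mul_le_of_eq_rpow_mul_rpow hconj hf hg hw.measurable
    (hw.measurable.pow_const _) hsplit

theorem lintegral_mul_le_of_lintegral_rpow_mul_le {r : ℝ} (hr : 1 < r) {C : ℝ≥0∞}
    {F G u v : ℝ → ℝ≥0∞} (hF : Measurable F) (hu : IsWeight u) (hv : IsWeight v)
    (hGv : ∀ x, G x ≤ v x)
    (hFG : ∫⁻ x, F x ^ r * (u x * v x ^ (1 - r)) ≤ C * ∫⁻ x, G x ^ r * (u x * v x ^ (1 - r))) :
    ∫⁻ x, F x * u x ≤ C ^ r⁻¹ * ∫⁻ x, v x * u x := by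
  have hconj : r.HolderConjugate r.conjExponent := .conjExponent hr
  have hr0 : 0 < r := hconj.pos
  have hsum : r⁻¹ + r.conjExponent⁻¹ = 1 := hconj.inv_add_inv_eq_one
  have hG : ∫⁻ x, G x ^ r * (u x * v x ^ (1 - r)) ≤ ∫⁻ x, v x * u x := by
    refine lintegral_mono_ae ?_
    filter_upwards [hv.ae_ne_zero, hv.ae_ne_top] with x hv0 hvx
    calc G x ^ r * (u x * v x ^ (1 - r)) ≤ v x ^ r * (u x * v x ^ (1 - r)) := by
          gcongr
          exact hGv x
      _ = v x ^ r * v x ^ (1 - r) * u x := by ring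
      _ = v x * u x := by
          rw [← ENNReal.rpow_add _ _ hv0 hvx, add_sub_cancel, ENNReal.rpow_one]
  have hsplit : ∀ᵐ x, u x = (u x * v x ^ (1 - r)) ^ r⁻¹ * (v x * u x) ^ r.conjExponent⁻¹ := by
    filter_upwards [hu.ae_ne_zero, hu.ae_ne_top, hv.ae_ne_zero, hv.ae_ne_top] with x hu0 hux hv0 hvx
    have hexp : (1 - r) * r⁻¹ + r.conjExponent⁻¹ = 0 := by
      rw [sub_mul, one_mul, mul_inv_cancel₀ hr0.ne']
      linarith
    rw [ENNReal.mul_rpow_of_nonneg _ _ (inv_nonneg.2 hr0.le),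
      ENNReal.mul_rpow_of_nonneg _ _ (inv_nonneg.2 hconj.symm.nonneg), ← ENNReal.rpow_mul,
      mul_comm (u x ^ _), mul_mul_mul_comm, ← ENNReal.rpow_add _ _ hv0 hvx, hexp,
      ← ENNReal.rpow_add _ _ hu0 hux, hsum, ENNReal.rpow_zero, ENNReal.rpow_one, one_mul]
  have hHolder := lintegral_mul_mul_le_of_eq_rpow_mul_rpow hconj hF (g := fun _ => 1)
    measurable_const (hu.measurable.mul (hv.measurable.pow_const _))
    (hv.measurable.mul hu.measurable) hsplit
  simp only [Pi.mul_apply, mul_one, ENNReal.one_rpow, one_mul] at hHolder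
  calc ∫⁻ x, F x * u x
      ≤ (C * ∫⁻ x, v x * u x) ^ r⁻¹ * (∫⁻ x, v x * u x) ^ r.conjExponent⁻¹ := by
        refine hHolder.trans ?_
        gcongr
        exact hFG.trans (by gcongr)
    _ = C ^ r⁻¹ * ∫⁻ x, v x * u x := by
        rw [ENNReal.mul_rpow_of_nonneg _ _ (inv_nonneg.2 hr0.le), mul_assoc,
          ← ENNReal.rpow_add_of_nonneg _ _ (inv_nonneg.2 hr0.le)
            (inv_nonneg.2 hconj.symm.nonneg), hsum, ENNReal.rpow_one]

theorem le_rpow_mul_of_le_mul_rpow {p q : ℝ} (hpq : p.HolderConjugate q) {T D H : ℝ≥0∞}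
    (hT : T ≠ ∞) (h : T ≤ D * (H ^ p⁻¹ * T ^ q⁻¹)) : T ≤ D ^ p * H := by
  rcases eq_or_ne T 0 with rfl | hT0
  · exact zero_le
  have hsplit : T = T ^ p⁻¹ * T ^ q⁻¹ := by
    rw [← ENNReal.rpow_add _ _ hT0 hT, hpq.inv_add_inv_eq_one, ENNReal.rpow_one]
  have hq0 : T ^ q⁻¹ ≠ 0 := by simp [ENNReal.rpow_eq_zero_iff, hT0, hT]
  have hqtop : T ^ q⁻¹ ≠ ∞ := by simp [ENNReal.rpow_eq_top_iff, hT0, hT]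
  have hroot : T ^ p⁻¹ ≤ D * H ^ p⁻¹ := by
    rw [← ENNReal.mul_le_mul_iff_left hq0 hqtop, ← hsplit, mul_assoc]
    exact h
  rwa [ENNReal.rpow_inv_le_iff hpq.pos, ENNReal.mul_rpow_of_nonneg _ _ hpq.nonneg,
    ENNReal.rpow_inv_rpow hpq.ne_zero] at hroot

theorem lintegral_rpow_le_of_forall_le {X : Type*} [MeasurableSpace X] {μ : Measure X}
    [SigmaFinite μ] {s : ℝ} (hs : 0 < s) {F : X → ℝ≥0∞} {c : ℝ≥0∞}
    (h : ∀ g, Measurable g → (∀ x, g x ≤ F x) → ∫⁻ x, g x ^ s ∂μ ≠ ∞ → ∫⁻ x, g x ^ s ∂μ ≤ c) :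
    ∫⁻ x, F x ^ s ∂μ ≤ c := by
  rw [lintegral_eq_nnreal]
  refine iSup₂_le fun φ hφ => le_of_forall_lt_imp_le_of_dense fun L hL => ?_
  rw [← SimpleFunc.lintegral_eq_lintegral] at hL
  obtain ⟨g, hgφ, hgtop, hLg⟩ := exists_lt_lintegral_simpleFunc_of_lt_lintegral
    (f := φ) (by simpa using hL)
  have hg := h (fun x => (g x : ℝ≥0∞) ^ s⁻¹) (g.measurable.coe_nnreal_ennreal.pow_const _)
    fun x => by
      rw [ENNReal.rpow_inv_le_iff hs]
      exact (ENNReal.coe_le_coe.2 (hgφ x)).trans (hφ x)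
  simp only [ENNReal.rpow_inv_rpow hs.ne'] at hg
  exact hLg.le.trans (hg hgtop.ne)

namespace WeightedBounded

variable {r s : ℝ} {K : ℝ≥0∞} {𝓕 : Set ((ℝ → ℝ≥0∞) × (ℝ → ℝ≥0∞))}

theorem fst_ae_eq_zero (hr : 1 < r) (h : WeightedBounded r 𝓕) {P : (ℝ → ℝ≥0∞) × (ℝ → ℝ≥0∞)}
    (hP : P ∈ 𝓕) (h0 : P.2 =ᵐ[volume] 0) : P.1 =ᵐ[volume] 0 := by
  have hr0 : 0 < r := zero_lt_one.trans hr
  obtain ⟨C, -, hC⟩ := h.exists_lintegral_le 1 one_ne_top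
  have hle := hC _ (.one hr) P hP
  have hsnd : ∫⁻ x, P.2 x ^ r * 1 = 0 := by
    simp only [mul_one, lintegral_eq_zero_iff ((h.measurable_snd P hP).pow_const r)]
    filter_upwards [h0] with x hx
    simp [hx, hr0]
  rw [hsnd, mul_zero, nonpos_iff_eq_zero] at hle
  simp only [mul_one, lintegral_eq_zero_iff ((h.measurable_fst P hP).pow_const r)] at hle
  filter_upwards [hle] with x hx
  simpa [hr0, hr0.not_gt] using hx

-- The dual form of the estimate: majorize `G` and the test function `k` by `A_1` weights `v`, `u`
-- of comparable norms, and use the hypothesis for the `A_r` weight `u * v ^ (1 - r)`.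
theorem exists_lintegral_mul_le (hr : 1 < r) (hs : 1 < s) (hK : K ≠ ∞)
    (h : WeightedBounded r 𝓕) :
    ∃ D : ℝ≥0∞, D ≠ ∞ ∧ ∀ w, IsApWeight s K w → ∀ P ∈ 𝓕, ∀ k : ℝ → ℝ≥0∞, Measurable k →
      ∫⁻ x, P.2 x ^ s * w x ≠ ∞ →
      ∫⁻ x, k x ^ s.conjExponent * w x ^ (-(s - 1)⁻¹) ≠ ∞ →
      ∫⁻ x, P.1 x * k x ≤ D * ((∫⁻ x, P.2 x ^ s * w x) ^ s⁻¹ *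
        (∫⁻ x, k x ^ s.conjExponent * w x ^ (-(s - 1)⁻¹)) ^ s.conjExponent⁻¹) := by
  have hconj : s.HolderConjugate s.conjExponent := .conjExponent hs
  have hs' : 0 ≤ s⁻¹ := inv_nonneg.2 hconj.nonneg
  have hq' : 0 ≤ s.conjExponent⁻¹ := inv_nonneg.2 hconj.symm.nonneg
  obtain ⟨A, hA, D₁, hD₁, hv⟩ := exists_isA1Weight_ge hs hK
  obtain ⟨B, hB, D₂, hD₂, hu⟩ := exists_isA1Weight_ge hconj.symm.lt
    (ENNReal.rpow_ne_top_of_nonneg (inv_nonneg.2 (sub_pos.2 hs).le) hK)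
  obtain ⟨C, hC, hFG⟩ := h.exists_lintegral_le (B * A ^ (r - 1))
    (ENNReal.mul_ne_top hB (ENNReal.rpow_ne_top_of_nonneg (sub_pos.2 hr).le hA))
  refine ⟨C ^ r⁻¹ * (D₁ ^ s⁻¹ * D₂ ^ s.conjExponent⁻¹),
    ENNReal.mul_ne_top (ENNReal.rpow_ne_top_of_nonneg (by positivity) hC) (ENNReal.mul_ne_top
      (ENNReal.rpow_ne_top_of_nonneg hs' hD₁) (ENNReal.rpow_ne_top_of_nonneg hq' hD₂)),
    fun w hw P hP k hk hH hT => ?_⟩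
  have hF := h.measurable_fst P hP
  have hG := h.measurable_snd P hP
  by_cases hG0 : ∫⁻ x, P.2 x = 0
  · have hF0 := h.fst_ae_eq_zero hr hP ((lintegral_eq_zero_iff hG).1 hG0)
    rw [lintegral_congr_ae (hF0.mono fun x hx => by rw [hx, Pi.zero_apply, zero_mul])]
    simp
  by_cases hk0 : ∫⁻ x, k x = 0
  · rw [lintegral_congr_ae (((lintegral_eq_zero_iff hk).1 hk0).mono fun x hx => by
      rw [hx, Pi.zero_apply, mul_zero])]
    simp
  obtain ⟨v, hvA, hGv, hvH⟩ := hv w hw P.2 hG hG0 hH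
  obtain ⟨u, huA, hku, huT⟩ := hu _ (hw.dual hs) k hk hk0 hT
  calc ∫⁻ x, P.1 x * k x ≤ ∫⁻ x, P.1 x * u x := by
        gcongr with x
        exact hku x
    _ ≤ C ^ r⁻¹ * ∫⁻ x, v x * u x :=
        lintegral_mul_le_of_lintegral_rpow_mul_le hr hF huA.toIsWeight hvA.toIsWeight hGv
          (hFG _ (huA.mul_rpow hB hA hvA hr) P hP)
    _ ≤ C ^ r⁻¹ * ((∫⁻ x, v x ^ s * w x) ^ s⁻¹ *
        (∫⁻ x, u x ^ s.conjExponent * w x ^ (-(s - 1)⁻¹)) ^ s.conjExponent⁻¹) := by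
        gcongr
        exact hw.toIsWeight.lintegral_mul_le hs hvA.measurable huA.measurable
    _ ≤ C ^ r⁻¹ * ((D₁ * ∫⁻ x, P.2 x ^ s * w x) ^ s⁻¹ *
        (D₂ * ∫⁻ x, k x ^ s.conjExponent * w x ^ (-(s - 1)⁻¹)) ^ s.conjExponent⁻¹) := by
        gcongr
    _ = _ := by
        rw [ENNReal.mul_rpow_of_nonneg _ _ hs', ENNReal.mul_rpow_of_nonneg _ _ hq']
        ring

theorem extrapolate (hr : 1 < r) (hs : 1 < s) (h : WeightedBounded r 𝓕) :
    WeightedBounded s 𝓕 where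
  measurable_fst := h.measurable_fst
  measurable_snd := h.measurable_snd
  exists_lintegral_le K hK := by
    have hconj : s.HolderConjugate s.conjExponent := .conjExponent hs
    obtain ⟨D, hD, hmul⟩ := h.exists_lintegral_mul_le hr hs hK
    refine ⟨D ^ s + 1, by simp [hD, hconj.nonneg], fun w hw P hP => ?_⟩
    by_cases hH : ∫⁻ x, P.2 x ^ s * w x = ∞
    · simp [hH]
    have : SigmaFinite (volume.withDensity w) :=
      SigmaFinite.withDensity_of_ne_top hw.ae_ne_top
    have hdens {f : ℝ → ℝ≥0∞} (hf : Measurable f) :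
        ∫⁻ x, f x ^ s ∂volume.withDensity w = ∫⁻ x, f x ^ s * w x := by
      rw [lintegral_withDensity_eq_lintegral_mul _ hw.measurable (hf.pow_const s)]
      simp only [Pi.mul_apply, mul_comm]
    refine le_trans ?_ (mul_le_mul_left le_self_add _)
    rw [← hdens (h.measurable_fst P hP)]
    refine lintegral_rpow_le_of_forall_le hconj.pos fun f hf hfF hfin => ?_
    rw [hdens hf] at hfin ⊢
    have hdual : ∫⁻ x, (f x ^ (s - 1) * w x) ^ s.conjExponent * w x ^ (-(s - 1)⁻¹) =
        ∫⁻ x, f x ^ s * w x := by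
      refine lintegral_congr_ae ?_
      filter_upwards [hw.ae_ne_zero, hw.ae_ne_top] with x h0 htop
      rw [ENNReal.mul_rpow_of_nonneg _ _ hconj.symm.nonneg, ← ENNReal.rpow_mul,
        hconj.sub_one_mul_conj, mul_assoc, ← ENNReal.rpow_add _ _ h0 htop,
        ← conjExponent_sub_one hs, neg_sub, add_sub_cancel, ENNReal.rpow_one]
    refine le_rpow_mul_of_le_mul_rpow hconj hfin ?_
    have hle := hmul w hw P hP (fun x => f x ^ (s - 1) * w x)
      ((hf.pow_const _).mul hw.measurable) hH (by rwa [hdual])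
    rw [hdual] at hle
    refine (lintegral_mono fun x => ?_).trans hle
    rw [← mul_rpow_sub_one hs.le, mul_assoc]
    gcongr
    exact hfF x

end WeightedBounded

/-! ### Families closed under Herz norms -/

/-- The pairs obtained from a measurable family of pairs in `𝓕`, indexed by `y : Y`, by taking the
`L^q` norm in `y` of both components with respect to some s-finite measure on `Y`. -/
def lpPairs (Y : Type*) [MeasurableSpace Y] (q : ℝ) (𝓕 : Set ((ℝ → ℝ≥0∞) × (ℝ → ℝ≥0∞))) :
    Set ((ℝ → ℝ≥0∞) × (ℝ → ℝ≥0∞)) :=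
  {P | ∃ (ν : Measure Y) (A B : Y → ℝ → ℝ≥0∞), SFinite ν ∧ Measurable (Function.uncurry A) ∧
    Measurable (Function.uncurry B) ∧ (∀ y, (A y, B y) ∈ 𝓕) ∧
    P = (fun x => (∫⁻ y, A y x ^ q ∂ν) ^ q⁻¹, fun x => (∫⁻ y, B y x ^ q ∂ν) ^ q⁻¹)}

theorem lintegral_lintegral_rpow_inv_rpow_mul {X Y : Type*} [MeasurableSpace X] [MeasurableSpace Y]
    {μ : Measure X} {ν : Measure Y} [SFinite μ] [SFinite ν] {q : ℝ} (hq : q ≠ 0)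
    {A : Y → X → ℝ≥0∞} (hA : Measurable (Function.uncurry A)) {w : X → ℝ≥0∞} (hw : Measurable w) :
    ∫⁻ x, ((∫⁻ y, A y x ^ q ∂ν) ^ q⁻¹) ^ q * w x ∂μ = ∫⁻ y, ∫⁻ x, A y x ^ q * w x ∂μ ∂ν := by
  have hAq : Measurable (Function.uncurry fun x y => A y x ^ q) :=
    (hA.comp measurable_swap).pow_const q
  simp_rw [ENNReal.rpow_inv_rpow hq, ← lintegral_mul_const _ (hAq.of_uncurry_left (x := _))]
  exact lintegral_lintegral_swap (hAq.mul (hw.comp measurable_fst)).aemeasurable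

namespace WeightedBounded

variable {𝓕 𝓖 : Set ((ℝ → ℝ≥0∞) × (ℝ → ℝ≥0∞))}

theorem mono {r : ℝ} (h : WeightedBounded r 𝓖) (hsub : 𝓕 ⊆ 𝓖) : WeightedBounded r 𝓕 where
  measurable_fst P hP := h.measurable_fst P (hsub hP)
  measurable_snd P hP := h.measurable_snd P (hsub hP)
  exists_lintegral_le K hK := by
    obtain ⟨C, hC, hle⟩ := h.exists_lintegral_le K hK
    exact ⟨C, hC, fun w hw P hP => hle w hw P (hsub hP)⟩

theorem lpPairs {q : ℝ} (hq : q ≠ 0) (h : WeightedBounded q 𝓕) (Y : Type*) [MeasurableSpace Y] :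
    WeightedBounded q (lpPairs Y q 𝓕) where
  measurable_fst := by
    rintro _ ⟨ν, A, -, _, hA, -, -, rfl⟩
    exact (hA.pow_const q).lintegral_prod_left'.pow_const q⁻¹
  measurable_snd := by
    rintro _ ⟨ν, -, B, _, -, hB, -, rfl⟩
    exact (hB.pow_const q).lintegral_prod_left'.pow_const q⁻¹
  exists_lintegral_le K hK := by
    obtain ⟨C, hC, hle⟩ := h.exists_lintegral_le K hK
    refine ⟨C, hC, ?_⟩
    rintro w hw _ ⟨ν, A, B, _, hA, hB, hAB, rfl⟩
    simp only [lintegral_lintegral_rpow_inv_rpow_mul hq hA hw.measurable,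
      lintegral_lintegral_rpow_inv_rpow_mul hq hB hw.measurable]
    exact (lintegral_mono fun y => hle w hw _ (hAB y)).trans_eq (lintegral_const_mul' _ _ hC)

end WeightedBounded

theorem lqNormOn_eq {q : ℝ≥0∞} (hq : q ≠ ∞) (s : Set ℝ) (g : ℝ → ℝ≥0∞) :
    lqNormOn q s g = (∫⁻ x in s, g x ^ q.toReal) ^ q.toReal⁻¹ := by
  rw [lqNormOn, if_neg hq, one_div]

theorem measurable_lqNormOn {Z : Type*} [MeasurableSpace Z] {q : ℝ≥0∞} (hq : q ≠ ∞) (s : Set ℝ)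
    {g : Z → ℝ → ℝ≥0∞} (hg : Measurable (Function.uncurry g)) :
    Measurable fun z => lqNormOn q s (g z) := by
  simp_rw [lqNormOn_eq hq]
  exact (hg.pow_const _).lintegral_prod_right'.pow_const _

theorem lpZNorm_mul_eq {p : ℝ≥0∞} (hp : p ≠ ∞) (c a : ℤ → ℝ≥0∞) :
    lpZNorm p (fun k => c k * a k) =
      (∫⁻ k, a k ^ p.toReal ∂Measure.count.withDensity fun k => c k ^ p.toReal) ^ p.toReal⁻¹ := by
  rw [lpZNorm, if_neg hp, one_div, lintegral_withDensity_eq_lintegral_mul _ .of_discrete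
    .of_discrete, lintegral_count]
  simp only [Pi.mul_apply, ENNReal.mul_rpow_of_nonneg _ _ ENNReal.toReal_nonneg]

/-- The pairs obtained from a measurable family of pairs in `𝓕`, indexed by `t : ℝ`, by taking the
Herz norm `K^{α,p}_q` in `t` of both components. -/
def herzPairs (α : ℝ) (p q : ℝ≥0∞) (𝓕 : Set ((ℝ → ℝ≥0∞) × (ℝ → ℝ≥0∞))) :
    Set ((ℝ → ℝ≥0∞) × (ℝ → ℝ≥0∞)) :=
  {P | ∃ A B : ℝ → ℝ → ℝ≥0∞, Measurable (Function.uncurry A) ∧ Measurable (Function.uncurry B) ∧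
    (∀ t, (A t, B t) ∈ 𝓕) ∧
    P = (fun x => herzNorm1 α p q fun t => A t x, fun x => herzNorm1 α p q fun t => B t x)}

theorem herzPairs_subset_lpPairs {α : ℝ} {p q : ℝ≥0∞} (hp : p ≠ ∞) (hq : q ≠ ∞)
    (𝓕 : Set ((ℝ → ℝ≥0∞) × (ℝ → ℝ≥0∞))) :
    herzPairs α p q 𝓕 ⊆ lpPairs ℤ p.toReal (lpPairs ℝ q.toReal 𝓕) := by
  rintro _ ⟨A, B, hA, hB, hAB, rfl⟩
  have hmeas {A : ℝ → ℝ → ℝ≥0∞} (hA : Measurable (Function.uncurry A)) :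
      Measurable (Function.uncurry fun (k : ℤ) x =>
        (∫⁻ t in herzRing k, A t x ^ q.toReal) ^ q.toReal⁻¹) :=
    measurable_from_prod_countable_right fun k =>
      ((hA.pow_const q.toReal).lintegral_prod_left' (μ := volume.restrict (herzRing k))).pow_const _
  refine ⟨Measure.count.withDensity fun k => ENNReal.ofReal (2 ^ ((k : ℝ) * α)) ^ p.toReal,
    _, _, inferInstance, hmeas hA, hmeas hB,
    fun k => ⟨volume.restrict (herzRing k), A, B, inferInstance, hA, hB, hAB, rfl⟩, ?_⟩
  simp only [herzNorm1, lpZNorm_mul_eq hp, lqNormOn_eq hq]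

theorem one_lt_toReal_of_mem_Ioo {p : ℝ≥0∞} (hp : p ∈ Set.Ioo 1 ∞) : 1 < p.toReal := by
  simpa using (ENNReal.toReal_lt_toReal one_ne_top hp.2.ne).2 hp.1

theorem WeightedBounded.herzPairs {𝓕 : Set ((ℝ → ℝ≥0∞) × (ℝ → ℝ≥0∞))} {p q : ℝ≥0∞}
    (hp : p ∈ Set.Ioo 1 ∞) (hq : q ∈ Set.Ioo 1 ∞) (h : WeightedBounded q.toReal 𝓕) (α : ℝ) :
    WeightedBounded p.toReal (herzPairs α p q 𝓕) := by
  have hp1 := one_lt_toReal_of_mem_Ioo hp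
  have hq1 := one_lt_toReal_of_mem_Ioo hq
  have hinner := (h.lpPairs (zero_lt_one.trans hq1).ne' ℝ).extrapolate hq1 hp1
  exact (hinner.lpPairs (zero_lt_one.trans hp1).ne' ℤ).mono
    (herzPairs_subset_lpPairs hp.2.ne hq.2.ne 𝓕)

/-! ### Mixed Herz norms of a maximal function -/

section Parameters

variable {Z : Type*} [MeasurableSpace Z]

theorem intervalMax_eq_iSup_rat (μ : Measure ℝ) (f : ℝ → ℝ≥0∞) (x : ℝ) :
    intervalMax μ f x = ⨆ (a : ℚ) (b : ℚ), (Set.Ioo (a : ℝ) b).indicator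
      (fun _ => (μ (Set.Ioo (a : ℝ) b))⁻¹ * ∫⁻ y in Set.Ioo (a : ℝ) b, f y ∂μ) x := by
  refine le_antisymm (intervalMax_le_iff.2 fun a b hx => ?_) (iSup₂_le fun a b => ?_)
  · let ι := {i : ℚ × ℚ // (a < i.1 ∧ (i.1 : ℝ) < x) ∧ x < i.2 ∧ (i.2 : ℝ) < b}
    let I (i : ι) : Set ℝ := Set.Ioo (i.1.1 : ℝ) i.1.2
    have hI : ⋃ i, I i = Set.Ioo a b := by
      refine Set.Subset.antisymm (Set.iUnion_subset fun i =>
        Set.Ioo_subset_Ioo i.2.1.1.le i.2.2.2.le) fun y hy => ?_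
      obtain ⟨c, hac, hc⟩ := exists_rat_btwn (lt_min hx.1 hy.1)
      obtain ⟨d, hd, hdb⟩ := exists_rat_btwn (max_lt hx.2 hy.2)
      rw [lt_min_iff] at hc
      rw [max_lt_iff] at hd
      exact Set.mem_iUnion.2 ⟨⟨(c, d), ⟨hac, hc.1⟩, hd.1, hdb⟩, hc.2, hd.2⟩
    have hdir : Directed (· ⊆ ·) I := fun i j =>
      ⟨⟨(min i.1.1 j.1.1, max i.1.2 j.1.2), by
        have := i.2
        have := j.2
        simp_all [Rat.cast_min, Rat.cast_max]⟩,
        Set.Ioo_subset_Ioo (by simp) (by simp), Set.Ioo_subset_Ioo (by simp) (by simp)⟩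
    rw [← hI, setLIntegral_iUnion_of_directed f hdir, ENNReal.mul_iSup]
    refine iSup_le fun i => le_iSup₂_of_le i.1.1 i.1.2 ?_
    have hxi : x ∈ Set.Ioo (i.1.1 : ℝ) i.1.2 := ⟨i.2.1.2, i.2.2.1⟩
    rw [Set.indicator_of_mem hxi]
    gcongr
    exact Set.subset_iUnion I i
  · exact Set.indicator_apply_le fun hx => average_le_intervalMax hx

theorem measurable_intervalMax_param {μ : Measure ℝ} [SFinite μ] {f : Z → ℝ → ℝ≥0∞} {g : Z → ℝ}
    (hf : Measurable (Function.uncurry f)) (hg : Measurable g) :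
    Measurable fun z => intervalMax μ (f z) (g z) := by
  simp_rw [intervalMax_eq_iSup_rat]
  refine .iSup fun a => .iSup fun b => ?_
  have hint : Measurable fun z =>
      (μ (Set.Ioo (a : ℝ) b))⁻¹ * ∫⁻ y in Set.Ioo (a : ℝ) b, f z y ∂μ :=
    hf.lintegral_prod_right'.const_mul _
  exact hint.indicator (hg measurableSet_Ioo)

theorem measurable_herzNorm1 {α : ℝ} {p q : ℝ≥0∞} (hq : q ≠ ∞) {g : Z → ℝ → ℝ≥0∞}
    (hg : Measurable (Function.uncurry g)) : Measurable fun z => herzNorm1 α p q (g z) := by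
  have hterm (k : ℤ) : Measurable fun z =>
      ENNReal.ofReal ((2 : ℝ) ^ ((k : ℝ) * α)) * lqNormOn q (herzRing k) (g z) :=
    (measurable_lqNormOn hq _ hg).const_mul _
  unfold herzNorm1 lpZNorm
  split_ifs
  · exact .iSup hterm
  · exact (Measurable.tsum fun k => (hterm k).pow_const _).pow_const _

theorem measurable_finSnoc {n : ℕ} {f : Z → Fin n → ℝ} {g : Z → ℝ} (hf : Measurable f)
    (hg : Measurable g) : Measurable fun z => (Fin.snoc (f z) (g z) : Fin (n + 1) → ℝ) :=
  (Continuous.finSnoc (A := fun _ : Fin (n + 1) => ℝ) continuous_fst continuous_snd).measurable.comp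
    (hf.prodMk hg)

theorem measurable_mixedHerzNormE {n : ℕ} {α : Fin n → ℝ} {p q : Fin n → ℝ≥0∞}
    (hq : ∀ i, q i ≠ ∞) {f : Z → (Fin n → ℝ) → ℝ≥0∞} (hf : Measurable (Function.uncurry f)) :
    Measurable fun z => mixedHerzNormE n α p q (f z) := by
  induction n generalizing Z with
  | zero => exact hf.of_uncurry_right
  | succ n ih =>
    refine measurable_herzNorm1 (hq _) (ih (Z := Z × ℝ) (fun i => hq i.castSucc) ?_)
    exact hf.comp (measurable_fst.fst.prodMk (measurable_finSnoc measurable_snd measurable_fst.snd))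

end Parameters

/-- The pairs formed by the mixed Herz norm, in `y`, of the maximal function of `f · y` and of `f`
itself, for a measurable function `f` on `ℝ × ℝⁿ`. -/
def maxPairs (n : ℕ) (α : Fin n → ℝ) (p q : Fin n → ℝ≥0∞) : Set ((ℝ → ℝ≥0∞) × (ℝ → ℝ≥0∞)) :=
  {P | ∃ f : ℝ → (Fin n → ℝ) → ℝ≥0∞, Measurable (Function.uncurry f) ∧
    P = (fun x => mixedHerzNormE n α p q fun y => intervalMax volume (fun t => f t y) x,
      fun x => mixedHerzNormE n α p q (f x))}

theorem maxPairs_succ_subset_herzPairs {n : ℕ} {α : Fin (n + 1) → ℝ} {p q : Fin (n + 1) → ℝ≥0∞}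
    (hq : ∀ i : Fin n, q i.castSucc ≠ ∞) :
    maxPairs (n + 1) α p q ⊆ herzPairs (α (Fin.last n)) (p (Fin.last n)) (q (Fin.last n))
      (maxPairs n (Fin.init α) (Fin.init p) (Fin.init q)) := by
  rintro _ ⟨f, hf, rfl⟩
  let F (s t : ℝ) (y : Fin n → ℝ) : ℝ≥0∞ := f s (Fin.snoc (α := fun _ => ℝ) y t)
  have hF : Measurable fun P : ((ℝ × ℝ) × (Fin n → ℝ)) × ℝ => F P.2 P.1.1.1 P.1.2 :=
    hf.comp (measurable_snd.prodMk (measurable_finSnoc measurable_fst.snd measurable_fst.fst.fst))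
  have hmax : Measurable fun P : (ℝ × ℝ) × (Fin n → ℝ) =>
      intervalMax volume (fun s => F s P.1.1 P.2) P.1.2 :=
    measurable_intervalMax_param hF measurable_fst.snd
  have hsnoc : Measurable fun P : (ℝ × ℝ) × (Fin n → ℝ) => F P.1.2 P.1.1 P.2 :=
    hf.comp (measurable_fst.snd.prodMk (measurable_finSnoc measurable_snd measurable_fst.fst))
  refine ⟨fun t x => mixedHerzNormE n (Fin.init α) (Fin.init p) (Fin.init q) fun y =>
      intervalMax volume (fun s => F s t y) x,
    fun t x => mixedHerzNormE n (Fin.init α) (Fin.init p) (Fin.init q) (F x t),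
    measurable_mixedHerzNormE (Z := ℝ × ℝ) hq hmax,
    measurable_mixedHerzNormE (Z := ℝ × ℝ) hq hsnoc, fun t => ⟨fun x => F x t, ?_, rfl⟩, rfl⟩
  exact hf.comp (measurable_fst.prodMk (measurable_finSnoc measurable_snd measurable_const))

theorem weightedBounded_maxPairs {n : ℕ} {α : Fin n → ℝ} {p q : Fin n → ℝ≥0∞}
    (hp : ∀ i, p i ∈ Set.Ioo 1 ∞) (hq : ∀ i, q i ∈ Set.Ioo 1 ∞) {r : ℝ} (hr : 1 < r) :
    WeightedBounded r (maxPairs n α p q) := by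
  induction n generalizing r with
  | zero =>
    refine ⟨?_, ?_, fun K hK => ?_⟩
    · rintro _ ⟨f, -, rfl⟩
      exact measurable_intervalMax _ _
    · rintro _ ⟨f, hf, rfl⟩
      exact hf.of_uncurry_right
    · obtain ⟨C, hC, hM⟩ := exists_lintegral_intervalMax_rpow_mul_weight_le hr hK
      refine ⟨C, hC, ?_⟩
      rintro w hw _ ⟨f, hf, rfl⟩
      exact hM w hw _ hf.of_uncurry_right
  | succ n ih =>
    have hinit : WeightedBounded (q (Fin.last n)).toReal
        (maxPairs n (Fin.init α) (Fin.init p) (Fin.init q)) :=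
      ih (fun i => hp _) (fun i => hq _) (one_lt_toReal_of_mem_Ioo (hq _))
    exact ((hinit.herzPairs (hp _) (hq _) _).mono
      (maxPairs_succ_subset_herzPairs fun i => (hq _).2.ne)).extrapolate
        (one_lt_toReal_of_mem_Ioo (hp _)) hr

/-! ### Power weights -/

theorem isWeight_enorm_rpow (a : ℝ) : IsWeight fun x : ℝ => ‖x‖ₑ ^ a := by
  have hid : IsWeight fun x : ℝ => ‖x‖ₑ :=
    { measurable := measurable_enorm
      ae_ne_zero := by simp [ae_iff]
      ae_ne_top := .of_forall fun x => enorm_ne_top }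
  exact hid.rpow a

theorem setLIntegral_Ioc_enorm_rpow {a : ℝ} (ha : -1 < a) {ρ : ℝ} (hρ : 0 ≤ ρ) :
    ∫⁻ y in Set.Ioc 0 ρ, ‖y‖ₑ ^ a = ENNReal.ofReal (ρ ^ (a + 1) / (a + 1)) := by
  have hint : IntegrableOn (fun y => y ^ a) (Set.Ioc 0 ρ) :=
    (intervalIntegral.intervalIntegrable_rpow' ha).1
  have hval := integral_rpow (a := 0) (b := ρ) (Or.inl ha)
  rw [intervalIntegral.integral_of_le hρ, Real.zero_rpow (by linarith), sub_zero] at hval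
  rw [← hval, ofReal_integral_eq_lintegral_ofReal hint]
  · refine setLIntegral_congr_fun measurableSet_Ioc fun y hy => ?_
    rw [Real.enorm_eq_ofReal hy.1.le, ENNReal.ofReal_rpow_of_pos hy.1]
  · exact (ae_restrict_mem measurableSet_Ioc).mono fun y hy => Real.rpow_nonneg hy.1.le _

theorem setLIntegral_Ioo_neg_enorm_rpow_le {a : ℝ} (ha : -1 < a) {ρ : ℝ} (hρ : 0 < ρ) :
    ∫⁻ y in Set.Ioo (-ρ) ρ, ‖y‖ₑ ^ a ≤
      2 * ENNReal.ofReal (a + 1)⁻¹ * ENNReal.ofReal ρ ^ (a + 1) := by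
  have hneg : ∫⁻ y in Set.Ioc (-ρ) 0, ‖y‖ₑ ^ a = ∫⁻ y in Set.Ioc 0 ρ, ‖y‖ₑ ^ a := by
    rw [← setLIntegral_congr (Ico_ae_eq_Ioc (a := 0) (b := ρ))]
    simpa using (Measure.measurePreserving_neg (volume : Measure ℝ)).setLIntegral_comp_preimage_emb
      (MeasurableEquiv.neg ℝ).measurableEmbedding (fun y => ‖y‖ₑ ^ a) (Set.Ico 0 ρ)
  calc ∫⁻ y in Set.Ioo (-ρ) ρ, ‖y‖ₑ ^ a
      ≤ ∫⁻ y in Set.Ioc (-ρ) 0 ∪ Set.Ioc 0 ρ, ‖y‖ₑ ^ a := by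
        rw [Set.Ioc_union_Ioc_eq_Ioc (neg_nonpos.2 hρ.le) hρ.le]
        exact lintegral_mono_set Set.Ioo_subset_Ioc_self
    _ ≤ (∫⁻ y in Set.Ioc (-ρ) 0, ‖y‖ₑ ^ a) + ∫⁻ y in Set.Ioc 0 ρ, ‖y‖ₑ ^ a :=
        lintegral_union_le _ _ _
    _ = 2 * ENNReal.ofReal (a + 1)⁻¹ * ENNReal.ofReal ρ ^ (a + 1) := by
        rw [hneg, setLIntegral_Ioc_enorm_rpow ha hρ.le, ← two_mul, div_eq_inv_mul,
          ENNReal.ofReal_mul (by simp; linarith), ENNReal.ofReal_rpow_of_pos hρ, mul_assoc]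

theorem rpow_le_rpow_of_nonpos {x y : ℝ≥0∞} {a : ℝ} (h : x ≤ y) (ha : a ≤ 0) :
    y ^ a ≤ x ^ a := by
  rw [← ENNReal.inv_le_inv, ← ENNReal.rpow_neg, ← ENNReal.rpow_neg]
  exact ENNReal.rpow_le_rpow h (neg_nonneg.2 ha)

theorem setLIntegral_Ioo_enorm_rpow_le_of_sub_le {a : ℝ} (ha : a ≤ 0) {b c x : ℝ}
    (hx : x ∈ Set.Ioo b c) (hbc : c - b ≤ 2⁻¹ * |x|) :
    ∫⁻ y in Set.Ioo b c, ‖y‖ₑ ^ a ≤ ENNReal.ofReal (c - b) * (2⁻¹ ^ a * ‖x‖ₑ ^ a) := by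
  calc ∫⁻ y in Set.Ioo b c, ‖y‖ₑ ^ a ≤ ∫⁻ _ in Set.Ioo b c, (2⁻¹ * ‖x‖ₑ) ^ a := by
        refine setLIntegral_mono' measurableSet_Ioo fun y hy => rpow_le_rpow_of_nonpos ?_ ha
        have hdist : |x - y| < c - b :=
          abs_lt.2 ⟨by linarith [hx.1, hy.2], by linarith [hx.2, hy.1]⟩
        have hy' : 2⁻¹ * |x| ≤ |y| := by linarith [abs_sub_abs_le_abs_sub x y]
        simpa [ENNReal.ofReal_mul, ENNReal.ofReal_inv_of_pos, Real.enorm_eq_ofReal_abs]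
          using ENNReal.ofReal_le_ofReal hy'
    _ = ENNReal.ofReal (c - b) * (2⁻¹ ^ a * ‖x‖ₑ ^ a) := by
        rw [setLIntegral_const, Real.volume_Ioo, mul_comm,
          ENNReal.mul_rpow_of_ne_top (by simp) enorm_ne_top]

theorem setLIntegral_Ioo_enorm_rpow_le_of_lt_sub {a : ℝ} (h : -1 < a) (ha : a ≤ 0) {b c x : ℝ}
    (hx : x ∈ Set.Ioo b c) (hbc : 2⁻¹ * |x| < c - b) :
    ∫⁻ y in Set.Ioo b c, ‖y‖ₑ ^ a ≤
      ENNReal.ofReal (c - b) * (6 * ENNReal.ofReal (a + 1)⁻¹ * ‖x‖ₑ ^ a) := by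
  have hR : 0 < |x| + (c - b) := by linarith [abs_nonneg x, hx.1.trans hx.2]
  calc ∫⁻ y in Set.Ioo b c, ‖y‖ₑ ^ a
      ≤ ∫⁻ y in Set.Ioo (-(|x| + (c - b))) (|x| + (c - b)), ‖y‖ₑ ^ a := by
        refine lintegral_mono_set fun y hy => abs_lt.1 ?_
        have hdist : |y - x| < c - b :=
          abs_lt.2 ⟨by linarith [hx.2, hy.1], by linarith [hx.1, hy.2]⟩
        linarith [abs_sub_abs_le_abs_sub y x]
    _ ≤ 2 * ENNReal.ofReal (a + 1)⁻¹ *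
          (ENNReal.ofReal (|x| + (c - b)) * ENNReal.ofReal (|x| + (c - b)) ^ a) := by
        refine (setLIntegral_Ioo_neg_enorm_rpow_le h hR).trans_eq ?_
        rw [add_comm a, ENNReal.rpow_add _ _ (by simpa using hR) (by simp), ENNReal.rpow_one]
    _ ≤ 2 * ENNReal.ofReal (a + 1)⁻¹ * (ENNReal.ofReal (3 * (c - b)) * ‖x‖ₑ ^ a) := by
        have hle : ‖x‖ₑ ≤ ENNReal.ofReal (|x| + (c - b)) := by
          rw [Real.enorm_eq_ofReal_abs]
          exact ENNReal.ofReal_le_ofReal (by linarith [hx.1.trans hx.2])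
        gcongr _ * (ENNReal.ofReal ?_ * ?_)
        · linarith
        · exact rpow_le_rpow_of_nonpos hle ha
    _ = ENNReal.ofReal (c - b) * (6 * ENNReal.ofReal (a + 1)⁻¹ * ‖x‖ₑ ^ a) := by
        rw [ENNReal.ofReal_mul (by norm_num), ENNReal.ofReal_ofNat]
        ring

theorem exists_isA1Weight_enorm_rpow {a : ℝ} (h : -1 < a) (ha : a < 0) :
    ∃ C : ℝ≥0∞, C ≠ ∞ ∧ IsA1Weight C fun x : ℝ => ‖x‖ₑ ^ a := by
  have hpos : 0 < a + 1 := by linarith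
  refine ⟨max (2⁻¹ ^ a) (6 * ENNReal.ofReal (a + 1)⁻¹), ?_, isWeight_enorm_rpow a, fun x => ?_⟩
  · exact (max_lt (ENNReal.rpow_ne_top_of_ne_zero (by simp) (by simp)).lt_top
      (by finiteness)).ne
  · rcases eq_or_ne x 0 with rfl | _
    · simp [ha, ENNReal.mul_top, hpos]
    refine intervalMax_le_iff.2 fun b c hx => ?_
    have hbc : 0 < c - b := sub_pos.2 (hx.1.trans hx.2)
    rw [Real.volume_Ioo, ENNReal.inv_mul_le_iff (by simpa using hbc) (by simp)]
    rcases le_or_gt (c - b) (2⁻¹ * |x|) with hshort | hlong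
    · grw [setLIntegral_Ioo_enorm_rpow_le_of_sub_le ha.le hx hshort, ← le_max_left]
    · grw [setLIntegral_Ioo_enorm_rpow_le_of_lt_sub h ha.le hx hlong, ← le_max_right]

-- With `θ = (a + 1) / p ∈ (0, 1)`, the weight is `|x| ^ (θ - 1) * (|x| ^ (-θ)) ^ (1 - p)`.
theorem exists_isApWeight_enorm_rpow {p a : ℝ} (hp : 1 < p) (h : -1 < a) (ha : a < p - 1) :
    ∃ K : ℝ≥0∞, K ≠ ∞ ∧ IsApWeight p K fun x : ℝ => ‖x‖ₑ ^ a := by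
  have hp0 : 0 < p := by linarith
  obtain ⟨θ, hθ⟩ : ∃ θ, θ = (a + 1) / p := ⟨_, rfl⟩
  have hθ0 : 0 < θ := hθ ▸ div_pos (by linarith) hp0
  have hθ1 : θ < 1 := hθ ▸ (div_lt_one hp0).2 (by linarith)
  obtain ⟨A, hA, hu⟩ := exists_isA1Weight_enorm_rpow (a := θ - 1) (by linarith) (by linarith)
  obtain ⟨B, hB, hv⟩ := exists_isA1Weight_enorm_rpow (a := -θ) (by linarith) (by linarith)
  have hfactor : (fun x : ℝ => ‖x‖ₑ ^ (θ - 1) * (‖x‖ₑ ^ (-θ)) ^ (1 - p)) =ᵐ[volume]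
      fun x => ‖x‖ₑ ^ a := by
    filter_upwards [(isWeight_enorm_rpow 1).ae_ne_zero] with x hx
    rw [ENNReal.rpow_one] at hx
    rw [← ENNReal.rpow_mul, ← ENNReal.rpow_add _ _ hx enorm_ne_top]
    congr 1
    rw [hθ]
    field_simp
    ring
  exact ⟨A * B ^ (p - 1), ENNReal.mul_ne_top hA (ENNReal.rpow_ne_top_of_nonneg (by linarith) hB),
    (hu.mul_rpow hA hB hv hp).congr hfactor (isWeight_enorm_rpow a).measurable⟩

/-! ### Weights adapted to dyadic rings -/

theorem ofReal_two_rpow (t : ℝ) : ENNReal.ofReal ((2 : ℝ) ^ t) = 2 ^ t := by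
  rw [← ENNReal.ofReal_rpow_of_pos two_pos, ENNReal.ofReal_ofNat]

theorem enorm_mem_Icc_of_mem_herzRing {j : ℤ} {x : ℝ} (hx : x ∈ herzRing j) :
    ‖x‖ₑ ∈ Set.Icc ((2 : ℝ≥0∞) ^ ((j : ℝ) - 1)) (2 ^ (j : ℝ)) := by
  have hcast : (j : ℝ) - 1 = (j - 1 : ℤ) := by push_cast; rfl
  rw [hcast, ← ofReal_two_rpow, ← ofReal_two_rpow, Real.rpow_intCast, Real.rpow_intCast,
    Real.enorm_eq_ofReal_abs]
  obtain ⟨⟨h1, h2⟩, h3⟩ := hx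
  exact ⟨ENNReal.ofReal_le_ofReal (le_of_not_gt fun h => h3 (abs_lt.1 h)),
    ENNReal.ofReal_le_ofReal (abs_lt.2 ⟨h1, h2⟩).le⟩

theorem enorm_rpow_le_of_mem_herzRing {j : ℤ} {x b c : ℝ} (hx : x ∈ herzRing j) (hc : |b| ≤ c) :
    ‖x‖ₑ ^ b ≤ 2 ^ (c + j * b) := by
  obtain ⟨hl, hu⟩ := enorm_mem_Icc_of_mem_herzRing hx
  rcases le_total 0 b with hb | hb
  · calc ‖x‖ₑ ^ b ≤ ((2 : ℝ≥0∞) ^ (j : ℝ)) ^ b := by gcongr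
      _ ≤ 2 ^ (c + j * b) := by
        rw [← ENNReal.rpow_mul]
        exact ENNReal.rpow_le_rpow_of_exponent_le one_le_two (by linarith [abs_nonneg b])
  · calc ‖x‖ₑ ^ b ≤ ((2 : ℝ≥0∞) ^ ((j : ℝ) - 1)) ^ b := rpow_le_rpow_of_nonpos hl hb
      _ ≤ 2 ^ (c + j * b) := by
        rw [← ENNReal.rpow_mul]
        exact ENNReal.rpow_le_rpow_of_exponent_le one_le_two (by linarith [abs_of_nonpos hb])

theorem le_enorm_rpow_of_mem_herzRing {j : ℤ} {x b c : ℝ} (hx : x ∈ herzRing j) (hc : |b| ≤ c) :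
    (2 : ℝ≥0∞) ^ (-c + j * b) ≤ ‖x‖ₑ ^ b := by
  have h := enorm_rpow_le_of_mem_herzRing hx (b := -b) ((abs_neg b).trans_le hc)
  rw [← ENNReal.inv_le_inv, ← ENNReal.rpow_neg, ← ENNReal.rpow_neg]
  exact h.trans_eq (by ring_nf)

/-- A weight comparable to `|x| ^ a` on the `k`-th dyadic ring and smaller than it by the factor
`2 ^ (-δ * |j - k|)` on the `j`-th. -/
def ringWeight (a δ : ℝ) (k : ℤ) (x : ℝ) : ℝ≥0∞ :=
  min (2 ^ (k * δ) * ‖x‖ₑ ^ (a - δ)) (2 ^ (-(k * δ)) * ‖x‖ₑ ^ (a + δ))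

theorem exists_isApWeight_ringWeight {p a δ : ℝ} (hp : 1 < p) (hδ : 0 ≤ δ) (h : -1 < a - δ)
    (ha : a + δ < p - 1) :
    ∃ K : ℝ≥0∞, K ≠ ∞ ∧ ∀ k, IsApWeight p K (ringWeight a δ k) := by
  obtain ⟨A, hA, hv⟩ := exists_isApWeight_enorm_rpow hp h (by linarith)
  obtain ⟨B, hB, hw⟩ := exists_isApWeight_enorm_rpow hp (by linarith : -1 < a + δ) ha
  refine ⟨_, ?_, fun k =>
    ((hv.mono (le_max_left A B)).const_mul hp (two_rpow_ne_zero _) (two_rpow_ne_top _)).min hp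
      ((hw.mono (le_max_right A B)).const_mul hp (two_rpow_ne_zero _) (two_rpow_ne_top _))⟩
  have hmax : max A B ≠ ∞ := (max_lt hA.lt_top hB.lt_top).ne
  exact ENNReal.mul_ne_top (ENNReal.LpAddConst_lt_top _).ne (by finiteness)

section RingWeight

variable {a δ : ℝ} {j k : ℤ} {x : ℝ}

theorem le_ringWeight_of_mem_herzRing (hδ : 0 ≤ δ) (hx : x ∈ herzRing k) :
    (2 : ℝ≥0∞) ^ (k * a) ≤ 2 ^ (|a| + δ) * ringWeight a δ k x := by
  have hsub := le_enorm_rpow_of_mem_herzRing hx (b := a - δ) (c := |a| + δ)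
    ((abs_sub a δ).trans_eq (by rw [abs_of_nonneg hδ]))
  have hadd := le_enorm_rpow_of_mem_herzRing hx (b := a + δ) (c := |a| + δ)
    ((abs_add_le a δ).trans_eq (by rw [abs_of_nonneg hδ]))
  have hle : (2 : ℝ≥0∞) ^ (-(|a| + δ) + k * a) ≤ ringWeight a δ k x := by
    refine le_min ?_ ?_
    · grw [← hsub, ← two_rpow_add]
      exact (congrArg _ (by ring)).le
    · grw [← hadd, ← two_rpow_add]
      exact (congrArg _ (by ring)).le
  grw [← hle, ← two_rpow_add]
  exact (congrArg _ (by ring)).le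

theorem ringWeight_le_of_mem_herzRing (hδ : 0 ≤ δ) (hx : x ∈ herzRing j) :
    ringWeight a δ k x ≤ 2 ^ (|a| + δ) * (2 ^ (-δ * |(k : ℝ) - j|) * 2 ^ (j * a)) := by
  rw [← two_rpow_add, ← two_rpow_add]
  rcases le_total (k : ℝ) j with hkj | hkj
  · have hsub := enorm_rpow_le_of_mem_herzRing hx (b := a - δ) (c := |a| + δ)
      ((abs_sub a δ).trans_eq (by rw [abs_of_nonneg hδ]))
    refine (min_le_left _ _).trans ?_
    grw [hsub, ← two_rpow_add, abs_of_nonpos (sub_nonpos.2 hkj)]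
    exact (congrArg _ (by ring)).le
  · have hadd := enorm_rpow_le_of_mem_herzRing hx (b := a + δ) (c := |a| + δ)
      ((abs_add_le a δ).trans_eq (by rw [abs_of_nonneg hδ]))
    refine (min_le_right _ _).trans ?_
    grw [hadd, ← two_rpow_add, abs_of_nonneg (sub_nonneg.2 hkj)]
    exact (congrArg _ (by ring)).le

end RingWeight

/-! ### Herz norm inequalities from weighted inequalities -/

theorem measurableSet_herzRing (k : ℤ) : MeasurableSet (herzRing k) :=
  measurableSet_Ioo.diff measurableSet_Ioo

theorem exists_mem_herzRing {x : ℝ} (hx : x ≠ 0) : ∃ k, x ∈ herzRing k := by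
  obtain ⟨n, hn, hn'⟩ := exists_mem_Ico_zpow (abs_pos.2 hx) one_lt_two
  refine ⟨n + 1, abs_lt.1 hn', fun h => ?_⟩
  rw [add_sub_cancel_right] at h
  exact (abs_lt.2 h).not_ge hn

theorem lintegral_le_tsum_herzRing (g : ℝ → ℝ≥0∞) :
    ∫⁻ x, g x ≤ ∑' j, ∫⁻ x in herzRing j, g x := by
  have hcover : (⋃ j, herzRing j) =ᵐ[volume] Set.univ := by
    rw [ae_eq_univ]
    refine measure_mono_null (t := {0}) (fun x hx => ?_) (by simp)
    by_contra h
    exact hx (Set.mem_iUnion.2 (exists_mem_herzRing h))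
  calc ∫⁻ x, g x = ∫⁻ x in ⋃ j, herzRing j, g x := by
        rw [setLIntegral_congr hcover, setLIntegral_univ]
    _ ≤ _ := lintegral_iUnion_le _ _

section Sequences

variable {q δ : ℝ} {C : ℝ≥0∞} {a b : ℤ → ℝ≥0∞}

theorem iSup_le_of_rpow_le_tsum (hq : 0 < q)
    (h : ∀ k : ℤ, a k ^ q ≤ C * ∑' j : ℤ, 2 ^ (-δ * |(k : ℝ) - j|) * b j ^ q) :
    ⨆ k, a k ≤ (C * geomSum δ) ^ q⁻¹ * ⨆ j, b j := by
  refine iSup_le fun k => (ENNReal.rpow_le_rpow_iff hq).1 ?_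
  rw [ENNReal.mul_rpow_of_nonneg _ _ hq.le, ENNReal.rpow_inv_rpow hq.ne']
  calc a k ^ q ≤ C * ∑' j : ℤ, 2 ^ (-δ * |(k : ℝ) - j|) * (⨆ j, b j) ^ q := by
        refine (h k).trans ?_
        gcongr with j
        exact le_iSup b j
    _ = C * geomSum δ * (⨆ j, b j) ^ q := by
        rw [ENNReal.tsum_mul_right, tsum_two_rpow_neg_mul_abs_sub, mul_assoc]

-- Half of the decay is spent on the Hölder-type bound `tsum_mul_rpow_le`, the other half on
-- summing over `k`.
theorem tsum_rpow_le_of_rpow_le_tsum {r : ℝ} (hq : 0 < q) (hr : 0 < r)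
    (h : ∀ k : ℤ, a k ^ q ≤ C * ∑' j : ℤ, 2 ^ (-δ * |(k : ℝ) - j|) * b j ^ q) :
    ∑' k, a k ^ r ≤ (C * geomSum (δ / 2)) ^ (r / q) * geomSum (δ / 2 * (r / q)) *
      ∑' j, b j ^ r := by
  have hs : 0 < r / q := div_pos hr hq
  have hqs : q * (r / q) = r := mul_div_cancel₀ r hq.ne'
  have hterm (k : ℤ) : a k ^ r ≤ (C * geomSum (δ / 2)) ^ (r / q) *
      ∑' j : ℤ, 2 ^ (-(δ / 2 * (r / q)) * |(k : ℝ) - j|) * b j ^ r :=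
    calc a k ^ r = (a k ^ q) ^ (r / q) := by rw [← ENNReal.rpow_mul, hqs]
      _ ≤ (C * ∑' j : ℤ, 2 ^ (-(δ / 2) * |(k : ℝ) - j|) *
            (2 ^ (-(δ / 2) * |(k : ℝ) - j|) * b j ^ q)) ^ (r / q) := by
          simp_rw [← mul_assoc, ← two_rpow_add, ← add_mul, ← neg_add, add_halves]
          exact ENNReal.rpow_le_rpow (h k) hs.le
      _ ≤ C ^ (r / q) * ((∑' j : ℤ, 2 ^ (-(δ / 2) * |(k : ℝ) - j|)) ^ (r / q) *
            ∑' j : ℤ, (2 ^ (-(δ / 2) * |(k : ℝ) - j|) * b j ^ q) ^ (r / q)) := by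
          rw [ENNReal.mul_rpow_of_nonneg _ _ hs.le]
          gcongr
          exact tsum_mul_rpow_le hs _ _
      _ = _ := by
          simp_rw [tsum_two_rpow_neg_mul_abs_sub, ENNReal.mul_rpow_of_nonneg _ _ hs.le,
            ← ENNReal.rpow_mul, hqs, mul_right_comm _ _ (r / q), neg_mul, mul_assoc]
  calc ∑' k, a k ^ r
      ≤ ∑' k : ℤ, (C * geomSum (δ / 2)) ^ (r / q) *
          ∑' j : ℤ, 2 ^ (-(δ / 2 * (r / q)) * |(j : ℝ) - k|) * b j ^ r := by
        simpa only [abs_sub_comm] using ENNReal.tsum_le_tsum hterm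
    _ = _ := by
        rw [ENNReal.tsum_mul_left, ENNReal.tsum_comm]
        simp_rw [ENNReal.tsum_mul_right, tsum_two_rpow_neg_mul_abs_sub]
        rw [ENNReal.tsum_mul_left, mul_assoc]

theorem exists_lpZNorm_le {p : ℝ≥0∞} (hp : p ≠ 0) (hq : 0 < q) (hδ : 0 < δ) (hC : C ≠ ∞) :
    ∃ C' : ℝ≥0∞, C' ≠ ∞ ∧ ∀ a b : ℤ → ℝ≥0∞,
      (∀ k : ℤ, a k ^ q ≤ C * ∑' j : ℤ, 2 ^ (-δ * |(k : ℝ) - j|) * b j ^ q) →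
        lpZNorm p a ≤ C' * lpZNorm p b := by
  rcases eq_or_ne p ∞ with rfl | hp_top
  · refine ⟨(C * geomSum δ) ^ q⁻¹, ENNReal.rpow_ne_top_of_nonneg (inv_nonneg.2 hq.le)
      (ENNReal.mul_ne_top hC (geomSum_ne_top hδ)), fun a b h => ?_⟩
    simpa only [lpZNorm, if_true] using iSup_le_of_rpow_le_tsum hq h
  · have hr : 0 < p.toReal := ENNReal.toReal_pos hp hp_top
    refine ⟨((C * geomSum (δ / 2)) ^ (p.toReal / q) * geomSum (δ / 2 * (p.toReal / q))) ^
      (1 / p.toReal), ?_, fun a b h => ?_⟩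
    · exact ENNReal.rpow_ne_top_of_nonneg (by positivity) (ENNReal.mul_ne_top
        (ENNReal.rpow_ne_top_of_nonneg (by positivity)
          (ENNReal.mul_ne_top hC (geomSum_ne_top (by positivity))))
        (geomSum_ne_top (by positivity)))
    · simp only [lpZNorm, if_neg hp_top]
      rw [← ENNReal.mul_rpow_of_nonneg _ _ (by positivity)]
      gcongr
      exact tsum_rpow_le_of_rpow_le_tsum hq hr h

end Sequences

theorem ofReal_two_rpow_mul_lqNormOn_rpow {q : ℝ≥0∞} (hq0 : q ≠ 0) (hq : q ≠ ∞) (t : ℝ) (s : Set ℝ)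
    (g : ℝ → ℝ≥0∞) :
    (ENNReal.ofReal ((2 : ℝ) ^ t) * lqNormOn q s g) ^ q.toReal =
      2 ^ (t * q.toReal) * ∫⁻ x in s, g x ^ q.toReal := by
  rw [ofReal_two_rpow, lqNormOn_eq hq, ENNReal.mul_rpow_of_nonneg _ _ ENNReal.toReal_nonneg,
    ← ENNReal.rpow_mul, ENNReal.rpow_inv_rpow (ENNReal.toReal_pos hq0 hq).ne']

theorem two_rpow_mul_setLIntegral_herzRing_le {a δ : ℝ} (hδ : 0 ≤ δ) (k : ℤ) (g : ℝ → ℝ≥0∞) :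
    2 ^ (k * a) * ∫⁻ x in herzRing k, g x ≤
      2 ^ (|a| + δ) * ∫⁻ x, g x * ringWeight a δ k x :=
  calc 2 ^ (k * a) * ∫⁻ x in herzRing k, g x
      = ∫⁻ x in herzRing k, 2 ^ (k * a) * g x :=
        (lintegral_const_mul' _ _ (two_rpow_ne_top _)).symm
    _ ≤ ∫⁻ x in herzRing k, 2 ^ (|a| + δ) * (g x * ringWeight a δ k x) := by
        refine setLIntegral_mono' (measurableSet_herzRing k) fun x hx => ?_
        rw [mul_comm (g x), ← mul_assoc]
        exact mul_le_mul_left (le_ringWeight_of_mem_herzRing hδ hx) _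
    _ ≤ ∫⁻ x, 2 ^ (|a| + δ) * (g x * ringWeight a δ k x) := setLIntegral_le_lintegral _ _
    _ = _ := lintegral_const_mul' _ _ (two_rpow_ne_top _)

theorem lintegral_mul_ringWeight_le {a δ : ℝ} (hδ : 0 ≤ δ) (k : ℤ) (g : ℝ → ℝ≥0∞) :
    ∫⁻ x, g x * ringWeight a δ k x ≤ 2 ^ (|a| + δ) *
      ∑' j : ℤ, 2 ^ (-δ * |(k : ℝ) - j|) * (2 ^ (j * a) * ∫⁻ x in herzRing j, g x) := by
  refine (lintegral_le_tsum_herzRing _).trans ?_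
  rw [← ENNReal.tsum_mul_left]
  refine ENNReal.tsum_le_tsum fun j => ?_
  calc ∫⁻ x in herzRing j, g x * ringWeight a δ k x
      ≤ ∫⁻ x in herzRing j, 2 ^ (|a| + δ) * (2 ^ (-δ * |(k : ℝ) - j|) * 2 ^ (j * a)) * g x := by
        refine setLIntegral_mono' (measurableSet_herzRing j) fun x hx => ?_
        rw [mul_comm (g x)]
        exact mul_le_mul_left (ringWeight_le_of_mem_herzRing hδ hx) _
    _ = _ := by
        rw [lintegral_const_mul' _ _ (ENNReal.mul_ne_top (two_rpow_ne_top _)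
          (ENNReal.mul_ne_top (two_rpow_ne_top _) (two_rpow_ne_top _)))]
        ring

theorem WeightedBounded.exists_herzNorm1_le {𝓕 : Set ((ℝ → ℝ≥0∞) × (ℝ → ℝ≥0∞))} {p q : ℝ≥0∞}
    {α : ℝ} (hp : p ≠ 0) (hq : q ∈ Set.Ioo 1 ∞)
    (hα : α ∈ Set.Ioo (-(1 / q.toReal)) (1 - 1 / q.toReal)) (h : WeightedBounded q.toReal 𝓕) :
    ∃ C : ℝ≥0∞, C ≠ ∞ ∧ ∀ P ∈ 𝓕, herzNorm1 α p q P.1 ≤ C * herzNorm1 α p q P.2 := by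
  have hq1 : 1 < q.toReal := one_lt_toReal_of_mem_Ioo hq
  have hq0 : 0 < q.toReal := zero_lt_one.trans hq1
  have hlow : -1 < α * q.toReal := by
    simpa [neg_div] using (div_lt_iff₀ hq0).1 (by simpa [neg_div] using hα.1)
  have hup : α * q.toReal < q.toReal - 1 := by
    have := mul_lt_mul_of_pos_right hα.2 hq0
    rwa [sub_mul, one_mul, one_div_mul_cancel hq0.ne'] at this
  set a := α * q.toReal with ha
  obtain ⟨δ, hδ, hδ_lt⟩ := exists_between
    (lt_min (neg_lt_iff_pos_add.1 hlow) (sub_pos.2 hup))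
  rw [lt_min_iff] at hδ_lt
  obtain ⟨K, hK, hw⟩ := exists_isApWeight_ringWeight hq1 hδ.le (by linarith : -1 < a - δ)
    (by linarith)
  obtain ⟨C, hC, hle⟩ := h.exists_lintegral_le K hK
  obtain ⟨C', hC', hseq⟩ := exists_lpZNorm_le hp hq0 hδ
    (C := 2 ^ (|a| + δ) * (C * 2 ^ (|a| + δ)))
    (ENNReal.mul_ne_top (two_rpow_ne_top _) (ENNReal.mul_ne_top hC (two_rpow_ne_top _)))
  refine ⟨C', hC', fun P hP => hseq _ _ fun k => ?_⟩
  simp only [ofReal_two_rpow_mul_lqNormOn_rpow (zero_lt_one.trans hq.1).ne' hq.2.ne, mul_assoc,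
    ← ha]
  refine (two_rpow_mul_setLIntegral_herzRing_le hδ.le k _).trans ?_
  grw [hle _ (hw k) P hP, lintegral_mul_ringWeight_le hδ.le]

/-! ### The maximal operator in the last variable -/

theorem maxVar_last_snoc {n : ℕ} (g : (Fin (n + 1) → ℝ) → ℝ≥0∞) (y : Fin n → ℝ) (x : ℝ) :
    maxVar (n + 1) (Fin.last n) g (Fin.snoc (α := fun _ => ℝ) y x) =
      intervalMax volume (fun t => g (Fin.snoc (α := fun _ => ℝ) y t)) x := by
  simp only [maxVar, intervalMax, Fin.snoc_last, Fin.update_snoc_last]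

theorem mixedHerz_maxVar_bounded_general {m : ℕ} {p q : Fin (m + 1) → ℝ≥0∞} {α : Fin (m + 1) → ℝ}
    (hp : ∀ i : Fin m, p i.castSucc ∈ Set.Ioo 1 ∞) (hp_last : p (Fin.last m) ≠ 0)
    (hq : ∀ i, q i ∈ Set.Ioo 1 ∞)
    (hα : α (Fin.last m) ∈
      Set.Ioo (-(1 / (q (Fin.last m)).toReal)) (1 - 1 / (q (Fin.last m)).toReal)) :
    ∃ C : ℝ≥0∞, 0 < C ∧ C ≠ ∞ ∧ ∀ g : (Fin (m + 1) → ℝ) → ℝ≥0∞, Measurable g →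
      mixedHerzNormE (m + 1) α p q (maxVar (m + 1) (Fin.last m) g) ≤
        C * mixedHerzNormE (m + 1) α p q g := by
  have hbdd : WeightedBounded (q (Fin.last m)).toReal
      (maxPairs m (Fin.init α) (Fin.init p) (Fin.init q)) :=
    weightedBounded_maxPairs hp (fun i => hq i.castSucc) (one_lt_toReal_of_mem_Ioo (hq _))
  obtain ⟨C, hC, hle⟩ := hbdd.exists_herzNorm1_le hp_last (hq _) hα
  refine ⟨C + 1, by positivity, by finiteness, fun g hg => ?_⟩
  have hsnoc : Measurable (Function.uncurry fun (s : ℝ) (y : Fin m → ℝ) =>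
      g (Fin.snoc (α := fun _ => ℝ) y s)) :=
    hg.comp (measurable_finSnoc (Z := ℝ × (Fin m → ℝ)) measurable_snd measurable_fst)
  simp only [mixedHerzNormE, maxVar_last_snoc]
  exact (hle _ ⟨_, hsnoc, rfl⟩).trans (mul_le_mul_left le_self_add _)

/-- boundedness of the maximal operator in the `n`-th variable. -/
theorem mixedHerz_maxVar_bounded (n : ℕ) (hn : 0 < n) (p q α : Fin n → ℝ)
    (hp : ∀ i, 1 < p i) (hq : ∀ i, 1 < q i)
    (hα : ∀ i, -(1 / q i) < α i ∧ α i < 1 - 1 / q i) :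
    ∃ C : ℝ≥0∞, 0 < C ∧ C ≠ ∞ ∧ ∀ f : (Fin n → ℝ) → ℂ, Measurable f →
      mixedHerzNormE n α (fun i => ENNReal.ofReal (p i)) (fun i => ENNReal.ofReal (q i))
          (maxVar n ⟨n - 1, by omega⟩ fun y => (‖f y‖₊ : ℝ≥0∞)) ≤
        C * herzNormC n α (fun i => ENNReal.ofReal (p i)) (fun i => ENNReal.ofReal (q i)) f := by
  obtain ⟨m, rfl⟩ := Nat.exists_eq_add_one.2 hn
  have hmem {t : ℝ} (ht : 1 < t) : ENNReal.ofReal t ∈ Set.Ioo 1 ∞ :=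
    ⟨ENNReal.one_lt_ofReal.2 ht, ENNReal.ofReal_lt_top⟩
  obtain ⟨C, hC0, hC, hle⟩ := mixedHerz_maxVar_bounded_general (α := α)
    (p := fun i => ENNReal.ofReal (p i)) (q := fun i => ENNReal.ofReal (q i))
    (fun i => hmem (hp i.castSucc)) (zero_lt_one.trans (hmem (hp _)).1).ne' (fun i => hmem (hq i))
    (by simpa [ENNReal.toReal_ofReal (zero_lt_one.trans (hq _)).le] using hα (Fin.last m))
  exact ⟨C, hC0, hC, fun f hf => hle _ hf.nnnorm.coe_nnreal_ennreal⟩
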